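/- Let α,β > −1/2 with α − β > −4, and let 0 < ε < π. Then there exist constants c > 0 depending only on α,β and C > 0 depending only on ε,α,β such that for every integer ℓ ≥ 1 and every θ with c/ℓ ≤ θ ≤ π − ε, |P_ℓ^{(α,β)}(cos θ) − ℓ̃^{−1/2} m_{α,β}(θ) [cos ω_α(ℓ̃θ) + ℓ̃^{−1} F^{(1)}_{α,β}(ℓ̃,θ)]| ≤ C ℓ̃^{−1/2} m_{α,β}(θ) (ℓ^{û(α)} θ^{ν̂(α)} + ℓ^{−2} θ^{−2}), where ℓ̃ := ℓ + (α+β+1)/2, F^{(1)}_{α,β}(ℓ̃,θ) := F^{(2)}_{α,β}(θ) cos ω_{α+1}(ℓ̃θ) − (αβ/2) cos ω_α(ℓ̃θ), F^{(2)}_{α,β}(θ) := ((β²−α²)/4) tan(θ/2) − ((4α²−1)/8) cot θ, û(α) := −2 + frac(α+1/2) (frac denotes fractional part), and ν̂(α) := α+5/2 if α < 1/2 and ν̂(α) := α+1/2 if α ≥ 1/2. -/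

import Mathlib

open MeasureTheory Real
open scoped ENNReal NNReal

/-- The classical Jacobi polynomial `P_n^{(a,b)}` (hypergeometric representation,
normalised so that `P_n^{(a,b)}(1) = Γ(n+a+1)/(Γ(n+1)Γ(a+1))`). -/
noncomputable def jacobiP (a b : ℝ) (n : ℕ) (x : ℝ) : ℝ :=
  ∑ s ∈ Finset.range (n + 1),
    (Real.Gamma ((n : ℝ) + a + 1) /
        (Real.Gamma ((s : ℝ) + a + 1) * (Nat.factorial (n - s) : ℝ))) *
      (Real.Gamma ((n : ℝ) + b + 1) /
        (Real.Gamma ((n : ℝ) - (s : ℝ) + b + 1) * (Nat.factorial s : ℝ))) *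
      ((x - 1) / 2) ^ s * ((x + 1) / 2) ^ (n - s)

/-- `M_ℓ^{(a,b)}`, the `L₂(w_{a,b})` normalisation constant of `P_ℓ^{(a,b)}`. -/
noncomputable def jacobiM (a b : ℝ) (ℓ : ℕ) : ℝ :=
  (2 : ℝ) ^ (a + b + 1) / (2 * (ℓ : ℝ) + a + b + 1) *
    (Real.Gamma ((ℓ : ℝ) + a + 1) * Real.Gamma ((ℓ : ℝ) + b + 1)) /
    (Real.Gamma ((ℓ : ℝ) + 1) * Real.Gamma ((ℓ : ℝ) + a + b + 1))

/-- The generalised Dirichlet kernel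
`v_L^{(a,b)}(t,s) = Σ_{ℓ=0}^{L} (M_ℓ^{(a,b)})⁻¹ P_ℓ^{(a,b)}(t) P_ℓ^{(a,b)}(s)`. -/
noncomputable def dirichletJ (a b : ℝ) (L : ℕ) (t s : ℝ) : ℝ :=
  ∑ ℓ ∈ Finset.range (L + 1), (jacobiM a b ℓ)⁻¹ * jacobiP a b ℓ t * jacobiP a b ℓ s

/-- The filtered Jacobi kernel
`v_{L,g}^{(a,b)}(t,s) = Σ_{ℓ=0}^{2L−1} g(ℓ/L) (M_ℓ^{(a,b)})⁻¹ P_ℓ^{(a,b)}(t) P_ℓ^{(a,b)}(s)`. -/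
noncomputable def filteredJ (a b : ℝ) (g : ℝ → ℝ) (L : ℕ) (t s : ℝ) : ℝ :=
  ∑ ℓ ∈ Finset.range (2 * L),
    g ((ℓ : ℝ) / (L : ℝ)) * (jacobiM a b ℓ)⁻¹ * jacobiP a b ℓ t * jacobiP a b ℓ s

/-- `Z(d,ℓ)`, the dimension of the space of spherical harmonics of degree `ℓ` on `S^d`. -/
noncomputable def Zdim (d ℓ : ℕ) : ℝ :=
  (2 * (ℓ : ℝ) + (d : ℝ) - 1) * Real.Gamma ((ℓ : ℝ) + (d : ℝ) - 1) /
    (Real.Gamma (d : ℝ) * Real.Gamma ((ℓ : ℝ) + 1))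

/-- The normalised Legendre polynomial `P_ℓ^{(d+1)}` for `S^d`. -/
noncomputable def normLegendre (d ℓ : ℕ) (t : ℝ) : ℝ :=
  jacobiP (((d : ℝ) - 2) / 2) (((d : ℝ) - 2) / 2) ℓ t /
    jacobiP (((d : ℝ) - 2) / 2) (((d : ℝ) - 2) / 2) ℓ 1

/-- The Dirichlet kernel on `S^d`: `v_L^{(d)}(t) = Σ_{ℓ=0}^L Z(d,ℓ) P_ℓ^{(d+1)}(t)`. -/
noncomputable def sphDirichlet (d L : ℕ) (t : ℝ) : ℝ :=
  ∑ ℓ ∈ Finset.range (L + 1), Zdim d ℓ * normLegendre d ℓ t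

/-- The filtered kernel on `S^d`: `v_{L,g}^{(d)}(t) = Σ_{ℓ=0}^∞ g(ℓ/L) Z(d,ℓ) P_ℓ^{(d+1)}(t)`. -/
noncomputable def sphFiltered (d : ℕ) (g : ℝ → ℝ) (L : ℕ) (t : ℝ) : ℝ :=
  ∑' ℓ : ℕ, g ((ℓ : ℝ) / (L : ℝ)) * Zdim d ℓ * normLegendre d ℓ t

/-- The surface area `|S^n| = 2π^{(n+1)/2}/Γ((n+1)/2)` of the unit sphere `S^n`. -/
noncomputable def sphereArea (n : ℕ) : ℝ :=
  2 * Real.pi ^ (((n : ℝ) + 1) / 2) / Real.Gamma (((n : ℝ) + 1) / 2)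

/-- `m_{a,b}(θ) = π^{−1/2} (sin(θ/2))^{−a−1/2} (cos(θ/2))^{−b−1/2}`. -/
noncomputable def mAB (a b θ : ℝ) : ℝ :=
  Real.pi ^ (-(1 / 2 : ℝ)) * Real.sin (θ / 2) ^ (-a - 1 / 2) *
    Real.cos (θ / 2) ^ (-b - 1 / 2)

/-- `ω_γ(z) = z − γπ/2 − π/4`. -/
noncomputable def omegaA (γ z : ℝ) : ℝ := z - γ * Real.pi / 2 - Real.pi / 4

/-- `F^{(2)}_{a,b}(θ) = ((b²−a²)/4) tan(θ/2) − ((4a²−1)/8) cot θ`. -/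
noncomputable def F2fn (a b θ : ℝ) : ℝ :=
  (b ^ 2 - a ^ 2) / 4 * Real.tan (θ / 2) - (4 * a ^ 2 - 1) / 8 * (Real.cos θ / Real.sin θ)

/-- `F^{(1)}_{a,b}(ℓ̃,θ) = F^{(2)}_{a,b}(θ) cos ω_{a+1}(ℓ̃θ) − (ab/2) cos ω_a(ℓ̃θ)`. -/
noncomputable def F1fn (a b lt θ : ℝ) : ℝ :=
  F2fn a b θ * Real.cos (omegaA (a + 1) (lt * θ)) - a * b / 2 * Real.cos (omegaA a (lt * θ))

/-- `û(a) = −2 + frac(a + 1/2)`. -/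
noncomputable def uHat (a : ℝ) : ℝ := -2 + Int.fract (a + 1 / 2)

/-- `ν̂(a) = a + 5/2` if `a < 1/2`, and `a + 1/2` if `a ≥ 1/2`. -/
noncomputable def nuHat (a : ℝ) : ℝ := if a < 1 / 2 then a + 5 / 2 else a + 1 / 2


/-- coefficients -/
noncomputable def jc (a b : ℝ) (n s : ℕ) : ℝ :=
  (Real.Gamma ((n : ℝ) + a + 1) /
        (Real.Gamma ((s : ℝ) + a + 1) * (Nat.factorial (n - s) : ℝ))) *
      (Real.Gamma ((n : ℝ) + b + 1) /
        (Real.Gamma ((n : ℝ) - (s : ℝ) + b + 1) * (Nat.factorial s : ℝ)))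

lemma jacobiP_eq (a b : ℝ) (n : ℕ) (x : ℝ) : jacobiP a b n x =
    ∑ s ∈ Finset.range (n + 1), jc a b n s * ((x - 1) / 2) ^ s * ((x + 1) / 2) ^ (n - s) := rfl

lemma jc_succ (a b : ℝ) (ha : -(1 / 2 : ℝ) < a) (hb : -(1 / 2 : ℝ) < b) (n s : ℕ) (hs : s ≤ n) :
    ((s : ℝ) + 1) * jc a b (n + 1) (s + 1) = ((n : ℝ) + 1 - s + b) * jc (a + 1) (b + 1) n s := by
  obtain ⟨k, rfl⟩ := Nat.exists_eq_add_of_le hs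
  have hk : (0 : ℝ) ≤ k := Nat.cast_nonneg k
  have hs0 : (0 : ℝ) ≤ s := Nat.cast_nonneg s
  unfold jc
  have e1 : s + k + 1 - (s + 1) = k := by omega
  have e2 : s + k - s = k := by omega
  rw [e1, e2, Nat.factorial_succ s]
  push_cast
  have g1 : Real.Gamma ((k : ℝ) + 1 + b + 1) = (k + 1 + b) * Real.Gamma ((k : ℝ) + 1 + b) :=
    Real.Gamma_add_one (by linarith)
  have r1 : (s : ℝ) + k + 1 - (s + 1) + b + 1 = k + 1 + b := by ring
  have r2 : (s : ℝ) + k - s + (b + 1) + 1 = k + 1 + b + 1 := by ring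
  have r3 : (s : ℝ) + k + (a + 1) + 1 = s + k + 1 + a + 1 := by ring
  have r4 : (s : ℝ) + k + (b + 1) + 1 = s + k + 1 + b + 1 := by ring
  have r5 : (s : ℝ) + (a + 1) + 1 = s + 1 + a + 1 := by ring
  have r6 : (s : ℝ) + k + 1 - s + b = k + 1 + b := by ring
  rw [r1, r2, r3, r4, r5, r6, g1]
  have p1 : Real.Gamma ((k : ℝ) + 1 + b) ≠ 0 := (Real.Gamma_pos_of_pos (by linarith)).ne'
  have p2 : Real.Gamma ((s : ℝ) + 1 + a + 1) ≠ 0 := (Real.Gamma_pos_of_pos (by linarith)).ne'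
  have p3 : (k.factorial : ℝ) ≠ 0 := by positivity
  have p4 : (s.factorial : ℝ) ≠ 0 := by positivity
  have p5 : (k : ℝ) + 1 + b ≠ 0 := by linarith
  have p6 : (s : ℝ) + 1 ≠ 0 := by linarith
  field_simp

lemma jc_same (a b : ℝ) (ha : -(1 / 2 : ℝ) < a) (hb : -(1 / 2 : ℝ) < b) (n s : ℕ) (hs : s ≤ n) :
    ((n : ℝ) + 1 - s) * jc a b (n + 1) s = ((s : ℝ) + a + 1) * jc (a + 1) (b + 1) n s := by
  obtain ⟨k, rfl⟩ := Nat.exists_eq_add_of_le hs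
  have hk : (0 : ℝ) ≤ k := Nat.cast_nonneg k
  have hs0 : (0 : ℝ) ≤ s := Nat.cast_nonneg s
  unfold jc
  have e1 : s + k + 1 - s = k + 1 := by omega
  have e2 : s + k - s = k := by omega
  rw [e1, e2, Nat.factorial_succ k]
  push_cast
  have g1 : Real.Gamma ((s : ℝ) + a + 1 + 1) = (s + a + 1) * Real.Gamma ((s : ℝ) + a + 1) :=
    Real.Gamma_add_one (by linarith)
  have r1 : (s : ℝ) + k + 1 - s + b + 1 = k + b + 2 := by ring
  have r2 : (s : ℝ) + k - s + (b + 1) + 1 = k + b + 2 := by ring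
  have r3 : (s : ℝ) + k + (a + 1) + 1 = s + k + 1 + a + 1 := by ring
  have r4 : (s : ℝ) + k + (b + 1) + 1 = s + k + 1 + b + 1 := by ring
  have r5 : (s : ℝ) + (a + 1) + 1 = s + a + 1 + 1 := by ring
  have r6 : (s : ℝ) + k + 1 - s = k + 1 := by ring
  rw [r1, r2, r3, r4, r5, r6, g1]
  have p1 : Real.Gamma ((k : ℝ) + b + 2) ≠ 0 := (Real.Gamma_pos_of_pos (by linarith)).ne'
  have p2 : Real.Gamma ((s : ℝ) + a + 1) ≠ 0 := (Real.Gamma_pos_of_pos (by linarith)).ne'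
  have p3 : (k.factorial : ℝ) ≠ 0 := by positivity
  have p4 : (s.factorial : ℝ) ≠ 0 := by positivity
  have p5 : (k : ℝ) + 1 ≠ 0 := by linarith
  have p6 : (s : ℝ) + a + 1 ≠ 0 := by linarith
  field_simp

lemma jacobiP_hasDerivAt (a b : ℝ) (ha : -(1 / 2 : ℝ) < a) (hb : -(1 / 2 : ℝ) < b) (n : ℕ)
    (x : ℝ) : HasDerivAt (jacobiP a b (n + 1))
      (((n : ℝ) + a + b + 2) / 2 * jacobiP (a + 1) (b + 1) n x) x := by
  have h1 : ∀ s ∈ Finset.range (n + 1 + 1), HasDerivAt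
      (fun x : ℝ => jc a b (n + 1) s * ((x - 1) / 2) ^ s * ((x + 1) / 2) ^ (n + 1 - s))
      (jc a b (n + 1) s * ((s : ℝ) * ((x - 1) / 2) ^ (s - 1) * (1 / 2)) *
          ((x + 1) / 2) ^ (n + 1 - s) +
        jc a b (n + 1) s * ((x - 1) / 2) ^ s * (((n + 1 - s : ℕ) : ℝ) *
          ((x + 1) / 2) ^ (n + 1 - s - 1) * (1 / 2))) x := by
    intro s _
    have d1 : HasDerivAt (fun x : ℝ => (x - 1) / 2) (1 / 2) x :=
      ((hasDerivAt_id x).sub_const 1).div_const 2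
    have d2 : HasDerivAt (fun x : ℝ => (x + 1) / 2) (1 / 2) x :=
      ((hasDerivAt_id x).add_const 1).div_const 2
    exact ((d1.pow s).const_mul _).mul (d2.pow (n + 1 - s))
  have h2 := HasDerivAt.fun_sum h1
  have : jacobiP a b (n + 1) = fun x : ℝ => ∑ s ∈ Finset.range (n + 1 + 1),
    jc a b (n + 1) s * ((x - 1) / 2) ^ s * ((x + 1) / 2) ^ (n + 1 - s) := by
    funext y; exact jacobiP_eq _ _ _ _
  rw [this]
  refine h2.congr_deriv (Eq.symm ?_)
  rw [Finset.sum_add_distrib, Finset.sum_range_succ' _ (n + 1),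
    Finset.sum_range_succ (fun s => jc a b (n + 1) s * ((x - 1) / 2) ^ s * (((n + 1 - s : ℕ) : ℝ) *
          ((x + 1) / 2) ^ (n + 1 - s - 1) * (1 / 2))) (n + 1)]
  simp only [Nat.cast_zero, zero_mul, mul_zero, add_zero, Nat.sub_self]
  rw [← Finset.sum_add_distrib, jacobiP_eq, Finset.mul_sum]
  refine Finset.sum_congr rfl fun s hs => ?_
  have hs' : s ≤ n := by simpa [Nat.lt_succ_iff] using hs
  have e1 : n + 1 - (s + 1) = n - s := by omega
  have e2 : n + 1 - s - 1 = n - s := by omega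
  have e3 : ((n + 1 - s : ℕ) : ℝ) = n + 1 - s := by
    rw [Nat.cast_sub (by omega)]; push_cast; ring
  rw [e1, e2, e3, Nat.add_sub_cancel]
  push_cast
  linear_combination (-(1 / 2 : ℝ) * ((x - 1) / 2) ^ s * ((x + 1) / 2) ^ (n - s)) *
    (jc_succ a b ha hb n s hs' + jc_same a b ha hb n s hs')

lemma jacobiP_hasDerivAt_low (a b : ℝ) (ha : -(1 / 2 : ℝ) < a) (hb : -(1 / 2 : ℝ) < b) (n : ℕ)
    (x : ℝ) : ∃ D, HasDerivAt (jacobiP (a + 1) (b + 1) n) D x ∧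
      ((x - 1) / 2) * ((x + 1) / 2) * (2 * D) +
        ((a + 1) * ((x + 1) / 2) + (b + 1) * ((x - 1) / 2)) * jacobiP (a + 1) (b + 1) n x =
        ((n : ℝ) + 1) * jacobiP a b (n + 1) x := by
  have h1 : ∀ s ∈ Finset.range (n + 1), HasDerivAt
      (fun x : ℝ => jc (a + 1) (b + 1) n s * ((x - 1) / 2) ^ s * ((x + 1) / 2) ^ (n - s))
      (jc (a + 1) (b + 1) n s * ((s : ℝ) * ((x - 1) / 2) ^ (s - 1) * (1 / 2)) *
          ((x + 1) / 2) ^ (n - s) +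
        jc (a + 1) (b + 1) n s * ((x - 1) / 2) ^ s * (((n - s : ℕ) : ℝ) *
          ((x + 1) / 2) ^ (n - s - 1) * (1 / 2))) x := by
    intro s _
    have d1 : HasDerivAt (fun x : ℝ => (x - 1) / 2) (1 / 2) x :=
      ((hasDerivAt_id x).sub_const 1).div_const 2
    have d2 : HasDerivAt (fun x : ℝ => (x + 1) / 2) (1 / 2) x :=
      ((hasDerivAt_id x).add_const 1).div_const 2
    exact ((d1.pow s).const_mul _).mul (d2.pow (n - s))
  have h2 := HasDerivAt.fun_sum h1
  refine ⟨_, h2, ?_⟩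
  rw [jacobiP_eq, jacobiP_eq, Finset.mul_sum, Finset.mul_sum, Finset.mul_sum, Finset.mul_sum,
    ← Finset.sum_add_distrib]
  set A := (x - 1) / 2
  set B := (x + 1) / 2
  have key : ∀ s ∈ Finset.range (n + 1),
      A * B * (2 * (jc (a + 1) (b + 1) n s * (s * A ^ (s - 1) * (1 / 2)) * B ^ (n - s) +
        jc (a + 1) (b + 1) n s * A ^ s * (((n - s : ℕ) : ℝ) * B ^ (n - s - 1) * (1 / 2)))) +
        ((a + 1) * B + (b + 1) * A) * (jc (a + 1) (b + 1) n s * A ^ s * B ^ (n - s)) =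
      (((n : ℝ) + 1 - s) * jc a b (n + 1) s * A ^ s * B ^ (n + 1 - s)) +
      ((s : ℝ) + 1) * jc a b (n + 1) (s + 1) * A ^ (s + 1) * B ^ (n + 1 - (s + 1)) := by
    intro s hs
    have hs' : s ≤ n := by simpa [Nat.lt_succ_iff] using hs
    rw [jc_same a b ha hb n s hs', jc_succ a b ha hb n s hs']
    obtain ⟨k, rfl⟩ := Nat.exists_eq_add_of_le hs'
    have e1 : s + k + 1 - s = k + 1 := by omega
    have e2 : s + k - s = k := by omega
    have e3 : s + k + 1 - (s + 1) = k := by omega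
    rw [e1, e2, e3]
    have q1 : A * (s * A ^ (s - 1)) = s * A ^ s := by
      rcases s with _ | s
      · simp
      · simp [pow_succ]; ring
    have q2 : B * (k * B ^ (k - 1)) = k * B ^ k := by
      rcases k with _ | s
      · simp
      · simp [pow_succ]; ring
    push_cast
    linear_combination (jc (a + 1) (b + 1) (s + k) s * B * B ^ k) * q1 +
      (jc (a + 1) (b + 1) (s + k) s * A * A ^ s) * q2
  rw [Finset.sum_congr rfl key, Finset.sum_add_distrib]
  have t1 : ∑ s ∈ Finset.range (n + 1), (((n : ℝ) + 1 - s) * jc a b (n + 1) s * A ^ s * B ^ (n + 1 - s))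
      = ∑ s ∈ Finset.range (n + 1 + 1), (((n : ℝ) + 1 - s) * jc a b (n + 1) s * A ^ s * B ^ (n + 1 - s)) := by
    rw [Finset.sum_range_succ _ (n + 1)]; simp
  have t2 : ∑ s ∈ Finset.range (n + 1), (((s : ℝ) + 1) * jc a b (n + 1) (s + 1) * A ^ (s + 1) * B ^ (n + 1 - (s + 1)))
      = ∑ s ∈ Finset.range (n + 1 + 1), ((s : ℝ) * jc a b (n + 1) s * A ^ s * B ^ (n + 1 - s)) := by
    rw [Finset.sum_range_succ' _ (n + 1)]; simp
  rw [t1, t2, ← Finset.sum_add_distrib]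
  refine Finset.sum_congr rfl fun s _ => ?_
  ring

/-- the Liouville normal form of the Jacobi polynomial -/
noncomputable def pf (a b : ℝ) (n : ℕ) (θ : ℝ) : ℝ :=
  Real.sin (θ / 2) ^ (a + 1 / 2) * Real.cos (θ / 2) ^ (b + 1 / 2) * jacobiP a b n (Real.cos θ)

noncomputable def hf (a b θ : ℝ) : ℝ :=
  (a + 1 / 2) / 2 * (Real.cos (θ / 2) / Real.sin (θ / 2)) -
    (b + 1 / 2) / 2 * (Real.sin (θ / 2) / Real.cos (θ / 2))

lemma sc_half_pos {θ : ℝ} (h0 : 0 < θ) (h1 : θ < Real.pi) :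
    0 < Real.sin (θ / 2) ∧ 0 < Real.cos (θ / 2) := by
  constructor
  · exact Real.sin_pos_of_pos_of_lt_pi (by linarith) (by linarith)
  · exact Real.cos_pos_of_mem_Ioo ⟨by linarith, by linarith⟩

lemma hasDerivAt_sin_half (θ : ℝ) :
    HasDerivAt (fun t : ℝ => Real.sin (t / 2)) (Real.cos (θ / 2) / 2) θ := by
  have := (Real.hasDerivAt_sin (θ / 2)).comp θ ((hasDerivAt_id θ).div_const 2)
  refine this.congr_deriv ?_
  ring

lemma hasDerivAt_cos_half (θ : ℝ) :
    HasDerivAt (fun t : ℝ => Real.cos (t / 2)) (-Real.sin (θ / 2) / 2) θ := by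
  have := (Real.hasDerivAt_cos (θ / 2)).comp θ ((hasDerivAt_id θ).div_const 2)
  refine this.congr_deriv ?_
  ring

lemma pf_hasDerivAt_gen (a b : ℝ) (n : ℕ) {θ D : ℝ} (h0 : 0 < θ) (h1 : θ < Real.pi)
    (hD : HasDerivAt (jacobiP a b n) D (Real.cos θ)) :
    HasDerivAt (pf a b n) (hf a b θ * pf a b n θ -
      2 * (Real.sin (θ / 2) ^ (a + 1 / 2) * Real.cos (θ / 2) ^ (b + 1 / 2)) *
        Real.sin (θ / 2) * Real.cos (θ / 2) * D) θ := by
  obtain ⟨hs, hc⟩ := sc_half_pos h0 h1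
  have d1 := (hasDerivAt_sin_half θ).rpow_const (p := a + 1 / 2) (Or.inl hs.ne')
  have d2 := (hasDerivAt_cos_half θ).rpow_const (p := b + 1 / 2) (Or.inl hc.ne')
  have d3 := hD.comp θ (Real.hasDerivAt_cos θ)
  have d := (d1.mul d2).mul d3
  refine d.congr_deriv ?_
  have e : Real.sin θ = 2 * Real.sin (θ / 2) * Real.cos (θ / 2) := by
    rw [← Real.sin_two_mul]; congr 1; ring
  rw [Real.rpow_sub_one hs.ne', Real.rpow_sub_one hc.ne', e]
  simp only [pf, hf, Function.comp, Pi.mul_apply]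
  field_simp
  ring

lemma pf_hasDerivAt (a b : ℝ) (ha : -(1 / 2 : ℝ) < a) (hb : -(1 / 2 : ℝ) < b) (n : ℕ)
    {θ : ℝ} (h0 : 0 < θ) (h1 : θ < Real.pi) :
    HasDerivAt (pf a b (n + 1))
      (hf a b θ * pf a b (n + 1) θ - ((n : ℝ) + a + b + 2) * pf (a + 1) (b + 1) n θ) θ := by
  obtain ⟨hs, hc⟩ := sc_half_pos h0 h1
  refine (pf_hasDerivAt_gen a b (n + 1) h0 h1 (jacobiP_hasDerivAt a b ha hb n _)).congr_deriv ?_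
  have e1 : a + 1 + 1 / 2 = (a + 1 / 2) + 1 := by ring
  have e2 : b + 1 + 1 / 2 = (b + 1 / 2) + 1 := by ring
  simp only [pf]
  rw [e1, e2, Real.rpow_add_one hs.ne', Real.rpow_add_one hc.ne']
  ring

lemma pf_hasDerivAt_low (a b : ℝ) (ha : -(1 / 2 : ℝ) < a) (hb : -(1 / 2 : ℝ) < b) (n : ℕ)
    {θ : ℝ} (h0 : 0 < θ) (h1 : θ < Real.pi) :
    HasDerivAt (pf (a + 1) (b + 1) n)
      (((n : ℝ) + 1) * pf a b (n + 1) θ - hf a b θ * pf (a + 1) (b + 1) n θ) θ := by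
  obtain ⟨hs, hc⟩ := sc_half_pos h0 h1
  obtain ⟨D, hD, hrel⟩ := jacobiP_hasDerivAt_low a b ha hb n (Real.cos θ)
  refine (pf_hasDerivAt_gen (a + 1) (b + 1) n h0 h1 hD).congr_deriv ?_
  have e1 : a + 1 + 1 / 2 = (a + 1 / 2) + 1 := by ring
  have e2 : b + 1 + 1 / 2 = (b + 1 / 2) + 1 := by ring
  have x1 : Real.cos θ = 2 * Real.cos (θ / 2) ^ 2 - 1 := by
    rw [← Real.cos_two_mul]; congr 1; ring
  have x2 : (Real.cos θ + 1) / 2 = Real.cos (θ / 2) ^ 2 := by rw [x1]; ring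
  have x3 : (Real.cos θ - 1) / 2 = -Real.sin (θ / 2) ^ 2 := by
    rw [x1]; have := Real.sin_sq_add_cos_sq (θ / 2); linarith
  rw [x2, x3] at hrel
  simp only [pf, hf]
  rw [e1, e2, Real.rpow_add_one hs.ne', Real.rpow_add_one hc.ne']
  set s := Real.sin (θ / 2)
  set c := Real.cos (θ / 2)
  field_simp
  linear_combination (4 : ℝ) * hrel

/-- WKB coefficient functions -/
noncomputable def kA (a : ℝ) : ℝ := (1 / 4 - a ^ 2) / 4
noncomputable def kB (b : ℝ) : ℝ := (b ^ 2 - 1 / 4) / 4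
noncomputable def qf (a b θ : ℝ) : ℝ :=
  kA a / Real.sin (θ / 2) ^ 2 - kB b / Real.cos (θ / 2) ^ 2
noncomputable def F2' (a b θ : ℝ) : ℝ :=
  kA a * (Real.cos (θ / 2) / Real.sin (θ / 2)) + kB b * (Real.sin (θ / 2) / Real.cos (θ / 2))
noncomputable def F2dd (a b θ : ℝ) : ℝ :=
  kA a / 2 * (Real.cos (θ / 2) / Real.sin (θ / 2) ^ 3) +
    kB b / 2 * (Real.sin (θ / 2) / Real.cos (θ / 2) ^ 3)

lemma F2fn_eq (a b : ℝ) {θ : ℝ} (h0 : 0 < θ) (h1 : θ < Real.pi) : F2fn a b θ = F2' a b θ := by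
  obtain ⟨hs, hc⟩ := sc_half_pos h0 h1
  have e : Real.sin θ = 2 * Real.sin (θ / 2) * Real.cos (θ / 2) := by
    rw [← Real.sin_two_mul]; congr 1; ring
  have x1 : Real.cos θ = Real.cos (θ / 2) ^ 2 - Real.sin (θ / 2) ^ 2 := by
    rw [← Real.cos_two_mul']; congr 1; ring
  rw [F2fn, F2', e, x1, Real.tan_eq_sin_div_cos, kA, kB]
  field_simp
  ring

lemma hasDerivAt_cot_half {θ : ℝ} (h0 : 0 < θ) (h1 : θ < Real.pi) :
    HasDerivAt (fun t : ℝ => Real.cos (t / 2) / Real.sin (t / 2))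
      (-1 / (2 * Real.sin (θ / 2) ^ 2)) θ := by
  obtain ⟨hs, hc⟩ := sc_half_pos h0 h1
  refine ((hasDerivAt_cos_half θ).div (hasDerivAt_sin_half θ) hs.ne').congr_deriv ?_
  field_simp
  have := Real.sin_sq_add_cos_sq (θ / 2)
  linarith

lemma hasDerivAt_tan_half {θ : ℝ} (h0 : 0 < θ) (h1 : θ < Real.pi) :
    HasDerivAt (fun t : ℝ => Real.sin (t / 2) / Real.cos (t / 2))
      (1 / (2 * Real.cos (θ / 2) ^ 2)) θ := by
  obtain ⟨hs, hc⟩ := sc_half_pos h0 h1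
  refine ((hasDerivAt_sin_half θ).div (hasDerivAt_cos_half θ) hc.ne').congr_deriv ?_
  field_simp
  have := Real.sin_sq_add_cos_sq (θ / 2)
  linarith

lemma F2'_hasDerivAt (a b : ℝ) {θ : ℝ} (h0 : 0 < θ) (h1 : θ < Real.pi) :
    HasDerivAt (F2' a b) (-qf a b θ / 2) θ := by
  obtain ⟨hs, hc⟩ := sc_half_pos h0 h1
  refine (((hasDerivAt_cot_half h0 h1).const_mul (kA a)).add
    ((hasDerivAt_tan_half h0 h1).const_mul (kB b))).congr_deriv ?_
  rw [qf]
  field_simp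
  ring

lemma qf_hasDerivAt (a b : ℝ) {θ : ℝ} (h0 : 0 < θ) (h1 : θ < Real.pi) :
    HasDerivAt (qf a b) (-2 * F2dd a b θ) θ := by
  obtain ⟨hs, hc⟩ := sc_half_pos h0 h1
  have d1 := (((hasDerivAt_sin_half θ).pow 2).inv (pow_ne_zero 2 hs.ne')).const_mul (kA a)
  have d2 := (((hasDerivAt_cos_half θ).pow 2).inv (pow_ne_zero 2 hc.ne')).const_mul (kB b)
  refine ((d1.sub d2).congr_deriv ?_)
  rw [F2dd]
  simp only [Pi.pow_apply]
  field_simp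
  ring

lemma hf_hasDerivAt (a b : ℝ) {θ : ℝ} (h0 : 0 < θ) (h1 : θ < Real.pi) :
    HasDerivAt (hf a b) (-(a + 1 / 2) / 4 / Real.sin (θ / 2) ^ 2 -
      (b + 1 / 2) / 4 / Real.cos (θ / 2) ^ 2) θ := by
  obtain ⟨hs, hc⟩ := sc_half_pos h0 h1
  refine (((hasDerivAt_cot_half h0 h1).const_mul ((a + 1 / 2) / 2)).sub
    ((hasDerivAt_tan_half h0 h1).const_mul ((b + 1 / 2) / 2))).congr_deriv ?_
  field_simp
  ring

noncomputable def pf1 (a b : ℝ) (n : ℕ) (θ : ℝ) : ℝ :=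
  hf a b θ * pf a b (n + 1) θ - ((n : ℝ) + a + b + 2) * pf (a + 1) (b + 1) n θ

lemma pf1_hasDerivAt (a b : ℝ) (ha : -(1 / 2 : ℝ) < a) (hb : -(1 / 2 : ℝ) < b) (n : ℕ)
    {θ : ℝ} (h0 : 0 < θ) (h1 : θ < Real.pi) :
    HasDerivAt (pf1 a b n)
      (-(((n : ℝ) + 1 + (a + b + 1) / 2) ^ 2 + qf a b θ) * pf a b (n + 1) θ) θ := by
  obtain ⟨hs, hc⟩ := sc_half_pos h0 h1
  refine (((hf_hasDerivAt a b h0 h1).mul (pf_hasDerivAt a b ha hb n h0 h1)).sub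
    ((pf_hasDerivAt_low a b ha hb n h0 h1).const_mul ((n : ℝ) + a + b + 2))).congr_deriv ?_
  have key : (-(a + 1 / 2) / 4 / Real.sin (θ / 2) ^ 2 - (b + 1 / 2) / 4 / Real.cos (θ / 2) ^ 2)
      + hf a b θ ^ 2 = - qf a b θ - (a + b + 1) ^ 2 / 4 := by
    have h := Real.sin_sq_add_cos_sq (θ / 2)
    have e : ∀ s c : ℝ, 0 < s → 0 < c → s ^ 2 + c ^ 2 = 1 → -(a + 1 / 2) / 4 / s ^ 2 - (b + 1 / 2) / 4 / c ^ 2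
      + ((a + 1 / 2) / 2 * (c / s) - (b + 1 / 2) / 2 * (s / c)) ^ 2 = - (kA a / s ^ 2 - kB b / c ^ 2) - (a + b + 1) ^ 2 / 4 := by
      intro s c hs hc h
      have f1 : (1 : ℝ) / s ^ 2 = 1 + (c / s) ^ 2 := by field_simp; linarith
      have f2 : (1 : ℝ) / c ^ 2 = 1 + (s / c) ^ 2 := by field_simp; linarith
      have f3 : (c / s) * (s / c) = 1 := by field_simp
      have g1 : ∀ k : ℝ, k / s ^ 2 = k * (1 + (c / s) ^ 2) := by intro k; rw [← f1]; ring
      have g2 : ∀ k : ℝ, k / c ^ 2 = k * (1 + (s / c) ^ 2) := by intro k; rw [← f2]; ring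
      rw [g1, g2, g1, g2, kA, kB]
      linear_combination (-(a + 1 / 2) * (b + 1 / 2) / 2) * f3
    exact e _ _ hs hc h
  linear_combination pf a b (n + 1) θ * key

/-- comparison function -/
noncomputable def vf (a b N θ : ℝ) : ℝ :=
  Real.cos (N * θ - a * Real.pi / 2 - Real.pi / 4) + N⁻¹ * (F2' a b θ *
    Real.sin (N * θ - a * Real.pi / 2 - Real.pi / 4) -
      a * b / 2 * Real.cos (N * θ - a * Real.pi / 2 - Real.pi / 4))
noncomputable def vf1 (a b N θ : ℝ) : ℝ :=
  -N * Real.sin (N * θ - a * Real.pi / 2 - Real.pi / 4) + N⁻¹ * (-qf a b θ / 2 *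
    Real.sin (N * θ - a * Real.pi / 2 - Real.pi / 4)) + F2' a b θ *
    Real.cos (N * θ - a * Real.pi / 2 - Real.pi / 4) +
      a * b / 2 * Real.sin (N * θ - a * Real.pi / 2 - Real.pi / 4)

lemma vf_hasDerivAt (a b : ℝ) {N θ : ℝ} (hN : 0 < N) (h0 : 0 < θ) (h1 : θ < Real.pi) :
    HasDerivAt (vf a b N) (vf1 a b N θ) θ := by
  have dω : HasDerivAt (fun t : ℝ => N * t - a * Real.pi / 2 - Real.pi / 4) N θ := by
    simpa using (((hasDerivAt_id θ).const_mul N).sub_const (a * Real.pi / 2)).sub_const (Real.pi / 4)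
  have dc := dω.cos
  have ds := dω.sin
  have dF := F2'_hasDerivAt a b h0 h1
  refine (dc.add (((dF.mul ds).sub (dc.const_mul (a * b / 2))).const_mul N⁻¹)).congr_deriv ?_
  rw [vf1]
  field_simp
  ring

lemma vf1_hasDerivAt (a b : ℝ) {N θ : ℝ} (hN : 0 < N) (h0 : 0 < θ) (h1 : θ < Real.pi) :
    HasDerivAt (vf1 a b N) (-(N ^ 2 + qf a b θ) * vf a b N θ + N⁻¹ *
      ((F2dd a b θ + qf a b θ * F2' a b θ) * Real.sin (N * θ - a * Real.pi / 2 - Real.pi / 4) -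
      qf a b θ * (a * b / 2) * Real.cos (N * θ - a * Real.pi / 2 - Real.pi / 4))) θ := by
  have dω : HasDerivAt (fun t : ℝ => N * t - a * Real.pi / 2 - Real.pi / 4) N θ := by
    simpa using (((hasDerivAt_id θ).const_mul N).sub_const (a * Real.pi / 2)).sub_const (Real.pi / 4)
  have dc := dω.cos
  have ds := dω.sin
  have dF := F2'_hasDerivAt a b h0 h1
  have dq := qf_hasDerivAt a b h0 h1
  refine ((((ds.const_mul (-N)).add ((((dq.neg).div_const 2).mul ds).const_mul N⁻¹)).add
    (dF.mul dc)).add (ds.const_mul (a * b / 2))).congr_deriv ?_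
  rw [vf]
  simp only [Pi.neg_apply]
  field_simp
  ring

lemma coef_bounds (a b ε : ℝ) (hε : 0 < ε) (hε2 : ε ≤ Real.pi / 2) :
    ∃ K : ℝ, 0 ≤ K ∧ ∀ t : ℝ, 0 < t → t ≤ Real.pi - ε →
      |qf a b t| ≤ K / t ^ 2 ∧
      |F2dd a b t + qf a b t * F2' a b t| + |qf a b t * (a * b / 2)| ≤ K / t ^ 3 := by
  have hpi := Real.pi_pos
  set k := Real.sin (ε / 2) with hk
  have hk0 : 0 < k := Real.sin_pos_of_pos_of_lt_pi (by linarith) (by linarith)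
  have hk1 : k ≤ 1 := Real.sin_le_one _
  set m := |kA a| + |kB b| with hm
  have hm0 : 0 ≤ m := by positivity
  refine ⟨m * (Real.pi / k) ^ 2 + (m + m ^ 2 + m * |a * b / 2|) * (Real.pi / k) ^ 3,
    by positivity, ?_⟩
  intro t h0 h1
  obtain ⟨hs, hc⟩ := sc_half_pos h0 (by linarith : t < Real.pi)
  set X := Real.pi / k / t with hX
  have hX0 : 0 < X := by positivity
  have hs1 : Real.sin (t / 2) ≤ 1 := Real.sin_le_one _
  have hc1 : Real.cos (t / 2) ≤ 1 := Real.cos_le_one _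
  have hsl : t / Real.pi ≤ Real.sin (t / 2) := by
    have := Real.mul_le_sin (x := t / 2) (by linarith) (by linarith)
    calc t / Real.pi = 2 / Real.pi * (t / 2) := by ring
      _ ≤ _ := this
  have hcl : k ≤ Real.cos (t / 2) := by
    rw [hk, ← Real.cos_pi_div_two_sub]
    exact Real.cos_le_cos_of_nonneg_of_le_pi (by linarith) (by linarith) (by linarith)
  have hσ : (Real.sin (t / 2))⁻¹ ≤ X := by
    rw [inv_le_comm₀ hs hX0, hX]
    calc (Real.pi / k / t)⁻¹ = k * (t / Real.pi) := by field_simp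
      _ ≤ 1 * (t / Real.pi) := by gcongr
      _ ≤ _ := by linarith
  have hτ : (Real.cos (t / 2))⁻¹ ≤ X := by
    rw [inv_le_comm₀ hc hX0, hX]
    calc (Real.pi / k / t)⁻¹ = k * (t / Real.pi) := by field_simp
      _ ≤ k * 1 := by gcongr; rw [div_le_one hpi]; linarith
      _ ≤ _ := by linarith
  have hX1 : 1 ≤ X := le_trans ((one_le_inv₀ hs).2 hs1) hσ
  have hσ0 : 0 < (Real.sin (t / 2))⁻¹ := by positivity
  have hτ0 : 0 < (Real.cos (t / 2))⁻¹ := by positivity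
  have bq : |qf a b t| ≤ m * X ^ 2 := by
    have e : qf a b t = kA a * (Real.sin (t / 2))⁻¹ ^ 2 - kB b * (Real.cos (t / 2))⁻¹ ^ 2 := by
      rw [qf]; field_simp
    rw [e]
    calc _ ≤ |kA a * (Real.sin (t / 2))⁻¹ ^ 2| + |kB b * (Real.cos (t / 2))⁻¹ ^ 2| := abs_sub _ _
      _ = |kA a| * (Real.sin (t / 2))⁻¹ ^ 2 + |kB b| * (Real.cos (t / 2))⁻¹ ^ 2 := by
          rw [abs_mul, abs_mul, abs_of_nonneg (sq_nonneg (Real.sin (t / 2))⁻¹),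
            abs_of_nonneg (sq_nonneg (Real.cos (t / 2))⁻¹)]
      _ ≤ |kA a| * X ^ 2 + |kB b| * X ^ 2 := by gcongr
      _ = _ := by rw [hm]; ring
  have bF : |F2' a b t| ≤ m * X := by
    rw [F2']
    calc _ ≤ |kA a * (Real.cos (t / 2) / Real.sin (t / 2))| +
          |kB b * (Real.sin (t / 2) / Real.cos (t / 2))| := abs_add_le _ _
      _ = |kA a| * (Real.cos (t / 2) * (Real.sin (t / 2))⁻¹) +
          |kB b| * (Real.sin (t / 2) * (Real.cos (t / 2))⁻¹) := by
          rw [abs_mul, abs_mul, abs_of_pos (div_pos hc hs), abs_of_pos (div_pos hs hc)]; rfl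
      _ ≤ |kA a| * (1 * X) + |kB b| * (1 * X) := by gcongr
      _ = _ := by rw [hm]; ring
  have bD : |F2dd a b t| ≤ m * X ^ 3 := by
    have e : F2dd a b t = kA a * (Real.cos (t / 2) * (Real.sin (t / 2))⁻¹ ^ 3 / 2) +
        kB b * (Real.sin (t / 2) * (Real.cos (t / 2))⁻¹ ^ 3 / 2) := by
      rw [F2dd]; field_simp
    rw [e]
    calc _ ≤ |kA a * (Real.cos (t / 2) * (Real.sin (t / 2))⁻¹ ^ 3 / 2)| +
          |kB b * (Real.sin (t / 2) * (Real.cos (t / 2))⁻¹ ^ 3 / 2)| := abs_add_le _ _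
      _ = |kA a| * (Real.cos (t / 2) * (Real.sin (t / 2))⁻¹ ^ 3 / 2) +
          |kB b| * (Real.sin (t / 2) * (Real.cos (t / 2))⁻¹ ^ 3 / 2) := by
          rw [abs_mul, abs_mul, abs_of_pos
            (by positivity : 0 < Real.cos (t / 2) * (Real.sin (t / 2))⁻¹ ^ 3 / 2), abs_of_pos
            (by positivity : 0 < Real.sin (t / 2) * (Real.cos (t / 2))⁻¹ ^ 3 / 2)]
      _ ≤ |kA a| * (1 * X ^ 3 / 1) + |kB b| * (1 * X ^ 3 / 1) := by gcongr <;> norm_num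
      _ = _ := by rw [hm]; ring
  constructor
  · calc |qf a b t| ≤ m * X ^ 2 := bq
      _ = m * (Real.pi / k) ^ 2 / t ^ 2 := by rw [hX]; ring
      _ ≤ _ := by
        gcongr
        have : 0 ≤ (m + m ^ 2 + m * |a * b / 2|) * (Real.pi / k) ^ 3 := by positivity
        linarith
  · calc |F2dd a b t + qf a b t * F2' a b t| + |qf a b t * (a * b / 2)|
        ≤ |F2dd a b t| + |qf a b t| * |F2' a b t| + |qf a b t| * |a * b / 2| := by
          rw [← abs_mul, ← abs_mul]
          gcongr
          exact abs_add_le _ _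
      _ ≤ m * X ^ 3 + (m * X ^ 2) * (m * X) + (m * X ^ 2 * X) * |a * b / 2| := by
          gcongr
          calc |qf a b t| ≤ m * X ^ 2 * 1 := by linarith
            _ ≤ _ := by gcongr
      _ = (m + m ^ 2 + m * |a * b / 2|) * (Real.pi / k) ^ 3 / t ^ 3 := by rw [hX]; ring
      _ ≤ _ := by
        gcongr
        have : 0 ≤ m * (Real.pi / k) ^ 2 := by positivity
        linarith

lemma comparison (w w1 g : ℝ → ℝ) (N K θ : ℝ) (hN : 1 ≤ N) (hK : 0 ≤ K) (hθ : 0 < θ)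
    (hθπ : θ ≤ Real.pi) (hNθ : 1 ≤ N * θ)
    (hw : ∀ t ∈ Set.uIcc θ (Real.pi / 2), HasDerivAt w (w1 t) t)
    (hw1 : ∀ t ∈ Set.uIcc θ (Real.pi / 2), HasDerivAt w1 (g t) t)
    (hg : ∀ t ∈ Set.uIcc θ (Real.pi / 2), |g t + N ^ 2 * w t| ≤ K / t ^ 2 * |w t| + K / (N * t ^ 3)) :
    N ^ 2 * w θ ^ 2 + w1 θ ^ 2 + 1 / (N ^ 2 * θ ^ 4) ≤ Real.exp (3 * K) *
      (N ^ 2 * w (Real.pi / 2) ^ 2 + w1 (Real.pi / 2) ^ 2 + 1 / (N ^ 2 * θ ^ 4)) := by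
  have hpi := Real.pi_pos
  have hpi3 := Real.pi_gt_three
  have hN0 : 0 < N := by linarith
  set μ := 1 / (N ^ 2 * θ ^ 4) with hμ
  have hμ0 : 0 < μ := by positivity
  set G : ℝ → ℝ := fun t => N ^ 2 * w t ^ 2 + w1 t ^ 2 + μ with hG
  have hpos : ∀ t ∈ Set.uIcc θ (Real.pi / 2), 0 < t := by
    intro t ht
    have := ht.1
    exact lt_of_lt_of_le (lt_min hθ (by linarith)) this
  have dG : ∀ t ∈ Set.uIcc θ (Real.pi / 2), HasDerivAt G (2 * w1 t * (g t + N ^ 2 * w t)) t := by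
    intro t ht
    refine (((((hw t ht).pow 2).const_mul (N ^ 2)).add ((hw1 t ht).pow 2)).add_const μ).congr_deriv ?_
    simp; ring
  set A : ℝ → ℝ := fun t => -K / N * t⁻¹ - K * θ ^ 2 / 2 * (t ^ 2)⁻¹ with hA
  set A' : ℝ → ℝ := fun t => K / (N * t ^ 2) + K * θ ^ 2 / t ^ 3 with hA'
  have dA : ∀ t ∈ Set.uIcc θ (Real.pi / 2), HasDerivAt A (A' t) t := by
    intro t ht
    have h0 := hpos t ht
    have d1 := (hasDerivAt_inv h0.ne').const_mul (-K / N)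
    have d2 := ((hasDerivAt_pow 2 t).inv (by positivity)).const_mul (K * θ ^ 2 / 2)
    refine (d1.sub d2).congr_deriv ?_
    simp only [hA']
    field_simp
    simp
    ring
  have bG : ∀ t ∈ Set.uIcc θ (Real.pi / 2), |2 * w1 t * (g t + N ^ 2 * w t)| ≤ A' t * G t := by
    intro t ht
    have h0 := hpos t ht
    have h1 := hg t ht
    rw [abs_mul, abs_mul, abs_two]
    have e1 : 2 * |w1 t| * |w t| ≤ G t / N := by
      rw [le_div_iff₀ hN0]
      have : 0 ≤ (N * |w t| - |w1 t|) ^ 2 := sq_nonneg _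
      have a1 := sq_abs (w t)
      have a2 := sq_abs (w1 t)
      simp only [hG]
      nlinarith
    have e2 : 2 * |w1 t| / N ≤ θ ^ 2 * G t := by
      have : 0 ≤ (θ * |w1 t| - 1 / (N * θ)) ^ 2 := sq_nonneg _
      have a2 := sq_abs (w1 t)
      have h3 : (θ * |w1 t| - 1 / (N * θ)) ^ 2 = θ ^ 2 * (w1 t ^ 2 + μ) - 2 * |w1 t| / N := by
        rw [← a2, hμ]; field_simp; ring
      have h4 : 0 ≤ θ ^ 2 * (N ^ 2 * w t ^ 2) := by positivity
      simp only [hG]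
      nlinarith
    calc 2 * |w1 t| * |g t + N ^ 2 * w t| ≤ 2 * |w1 t| * (K / t ^ 2 * |w t| + K / (N * t ^ 3)) := by
          gcongr
      _ = K / t ^ 2 * (2 * |w1 t| * |w t|) + K / t ^ 3 * (2 * |w1 t| / N) := by field_simp
      _ ≤ K / t ^ 2 * (G t / N) + K / t ^ 3 * (θ ^ 2 * G t) := by gcongr
      _ = _ := by simp only [hA']; field_simp
  have hKN : K / N * θ⁻¹ ≤ K := by
    have : K / N * θ⁻¹ = K / (N * θ) := by field_simp
    rw [this]; exact div_le_self hK hNθ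
  have hGπ : 0 < G (Real.pi / 2) := by simp only [hG]; positivity
  show G θ ≤ Real.exp (3 * K) * G (Real.pi / 2)
  rcases le_total θ (Real.pi / 2) with hle | hle
  · have hmono : MonotoneOn (fun t => Real.exp (A t) * G t) (Set.Icc θ (Real.pi / 2)) := by
      rw [← Set.uIcc_of_le hle]
      refine monotoneOn_of_hasDerivWithinAt_nonneg (convex_uIcc _ _)
        (fun t ht => (((dA t ht).exp.mul (dG t ht)).continuousAt).continuousWithinAt)
        (fun t ht => ((dA t (interior_subset ht)).exp.mul
          (dG t (interior_subset ht))).hasDerivWithinAt) ?_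
      intro t ht
      have := (abs_le.1 (bG t (interior_subset ht))).1
      have h2 := Real.exp_pos (A t)
      nlinarith
    have h := hmono (Set.left_mem_Icc.2 hle) (Set.right_mem_Icc.2 hle) hle
    simp only at h
    have h2 : G θ = Real.exp (-A θ) * (Real.exp (A θ) * G θ) := by
      rw [← mul_assoc, ← Real.exp_add]; simp
    rw [h2]
    calc _ ≤ Real.exp (-A θ) * (Real.exp (A (Real.pi / 2)) * G (Real.pi / 2)) := by gcongr
      _ = Real.exp (-A θ + A (Real.pi / 2)) * G (Real.pi / 2) := by rw [Real.exp_add]; ring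
      _ ≤ _ := by
        gcongr
        have h3 : -A θ = K / N * θ⁻¹ + K / 2 := by simp only [hA]; field_simp; ring
        have h4 : A (Real.pi / 2) ≤ 0 := by
          have : 0 ≤ K / N * (Real.pi / 2)⁻¹ + K * θ ^ 2 / 2 * ((Real.pi / 2) ^ 2)⁻¹ := by positivity
          have e : A (Real.pi / 2) = -(K / N * (Real.pi / 2)⁻¹ + K * θ ^ 2 / 2 * ((Real.pi / 2) ^ 2)⁻¹) := by
            simp only [hA]; ring
          linarith
        linarith
  · have hmono : AntitoneOn (fun t => Real.exp (-A t) * G t) (Set.Icc (Real.pi / 2) θ) := by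
      rw [← Set.uIcc_of_ge hle]
      refine antitoneOn_of_hasDerivWithinAt_nonpos (convex_uIcc _ _)
        (fun t ht => (((dA t ht).neg.exp.mul (dG t ht)).continuousAt).continuousWithinAt)
        (fun t ht => ((dA t (interior_subset ht)).neg.exp.mul
          (dG t (interior_subset ht))).hasDerivWithinAt) ?_
      intro t ht
      have := (abs_le.1 (bG t (interior_subset ht))).2
      have h2 := Real.exp_pos (-A t)
      simp only [Pi.neg_apply]
      nlinarith
    have h := hmono (Set.left_mem_Icc.2 hle) (Set.right_mem_Icc.2 hle) hle
    simp only at h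
    have h2 : G θ = Real.exp (A θ) * (Real.exp (-A θ) * G θ) := by
      rw [← mul_assoc, ← Real.exp_add]; simp
    rw [h2]
    calc _ ≤ Real.exp (A θ) * (Real.exp (-A (Real.pi / 2)) * G (Real.pi / 2)) := by gcongr
      _ = Real.exp (A θ + -A (Real.pi / 2)) * G (Real.pi / 2) := by rw [Real.exp_add]; ring
      _ ≤ _ := by
        gcongr
        have h4 : A θ ≤ 0 := by
          have : 0 ≤ K / N * θ⁻¹ + K * θ ^ 2 / 2 * (θ ^ 2)⁻¹ := by positivity
          have e : A θ = -(K / N * θ⁻¹ + K * θ ^ 2 / 2 * (θ ^ 2)⁻¹) := by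
            simp only [hA]; ring
          linarith
        have h5 : -A (Real.pi / 2) = K / N * (Real.pi / 2)⁻¹ + K * θ ^ 2 / 2 * ((Real.pi / 2) ^ 2)⁻¹ := by
          simp only [hA]; ring
        have h6 : K / N * (Real.pi / 2)⁻¹ ≤ K * 1 := by
          gcongr
          · exact div_le_self hK hN
          · apply inv_le_one_of_one_le₀; linarith
        have h7 : K * θ ^ 2 / 2 * ((Real.pi / 2) ^ 2)⁻¹ ≤ 2 * K := by
          calc K * θ ^ 2 / 2 * ((Real.pi / 2) ^ 2)⁻¹ ≤ K * Real.pi ^ 2 / 2 * ((Real.pi / 2) ^ 2)⁻¹ := by gcongr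
            _ = 2 * K := by field_simp
        linarith

lemma choose_rec (x : ℝ) (k : ℕ) :
    Ring.choose x (k + 1) * ((k : ℝ) + 1) = Ring.choose x k * (x - k) := by
  have h1 := Ring.descPochhammer_eq_factorial_smul_choose x (k + 1)
  have h2 := Ring.descPochhammer_eq_factorial_smul_choose x k
  rw [descPochhammer_succ_right, Polynomial.smeval_mul, h2] at h1
  simp [Polynomial.smeval_sub, Polynomial.smeval_X, Polynomial.smeval_natCast, Nat.factorial_succ] at h1
  have : (k.factorial : ℝ) ≠ 0 := by positivity
  apply mul_left_cancel₀ this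
  linarith

lemma choose_gamma (x : ℝ) (k : ℕ) (h : -1 < x - k) :
    Ring.choose x k = Real.Gamma (x + 1) / (Real.Gamma (x - k + 1) * (Nat.factorial k : ℝ)) := by
  induction k with
  | zero =>
    have : Real.Gamma (x + 1) ≠ 0 := (Real.Gamma_pos_of_pos (by simp at h; linarith)).ne'
    simp [this]
  | succ k ih =>
    push_cast at h ⊢
    have ih := ih (by linarith)
    have hr := choose_rec x k
    have hk : (0 : ℝ) < (k : ℝ) + 1 := by positivity
    have hg : Real.Gamma (x - k + 1) = (x - k) * Real.Gamma (x - k) :=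
      Real.Gamma_add_one (by linarith)
    rw [ih, hg] at hr
    have p1 : Real.Gamma (x - k) ≠ 0 := (Real.Gamma_pos_of_pos (by linarith)).ne'
    have p2 : x - k ≠ 0 := by linarith
    have e : x - (k + 1) + 1 = x - k := by ring
    rw [e, Nat.factorial_succ]
    push_cast
    apply mul_right_cancel₀ hk.ne'
    rw [hr]
    field_simp

noncomputable def ccf (x y : ℝ) (k : ℕ) : ℝ :=
  ∑ p ∈ Finset.HasAntidiagonal.antidiagonal k, Ring.choose x p.1 * ((-1) ^ p.2 * Ring.choose y p.2)

lemma binom_hasSum (x : ℝ) (z : ℂ) (hz : ‖z‖ < 1) :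
    HasSum (fun k : ℕ => ((Ring.choose x k : ℝ) : ℂ) * z ^ k) ((1 + z) ^ (x : ℂ)) ∧
    Summable (fun k : ℕ => ‖((Ring.choose x k : ℝ) : ℂ) * z ^ k‖) := by
  have h := Complex.one_add_cpow_hasFPowerSeriesOnBall_zero (a := (x : ℂ))
  have hz' : z ∈ Metric.eball (0 : ℂ) 1 := by
    rw [← ENNReal.ofReal_one, Metric.eball_ofReal]; simpa using hz
  have e : ∀ k : ℕ, (binomialSeries ℂ (x : ℂ) k fun _ => z) = ((Ring.choose x k : ℝ) : ℂ) * z ^ k := by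
    intro k
    rw [binomialSeries_apply]
    have := Ring.map_choose Complex.ofRealHom x k
    simp only [Complex.ofRealHom_eq_coe] at this
    simp [this]
  constructor
  · have := h.hasSum hz'
    simpa [e] using this
  · have := FormalMultilinearSeries.summable_norm_apply (p := binomialSeries ℂ (x : ℂ)) (x := z)
      (Metric.eball_subset_eball h.r_le hz')
    simpa only [e] using this

lemma ccf_hasSum (x y : ℝ) (z : ℂ) (hz : ‖z‖ < 1) :
    HasSum (fun k : ℕ => ((ccf x y k : ℝ) : ℂ) * z ^ k) ((1 + z) ^ (x : ℂ) * (1 - z) ^ (y : ℂ)) ∧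
    Summable (fun k : ℕ => ‖((ccf x y k : ℝ) : ℂ) * z ^ k‖) := by
  obtain ⟨h1, s1⟩ := binom_hasSum x z hz
  obtain ⟨h2, s2⟩ := binom_hasSum y (-z) (by simpa using hz)
  have e : ∀ k : ℕ, ∑ p ∈ Finset.HasAntidiagonal.antidiagonal k, (((Ring.choose x p.1 : ℝ) : ℂ) * z ^ p.1) *
      (((Ring.choose y p.2 : ℝ) : ℂ) * (-z) ^ p.2) = ((ccf x y k : ℝ) : ℂ) * z ^ k := by
    intro k
    rw [ccf, Complex.ofReal_sum, Finset.sum_mul]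
    refine Finset.sum_congr rfl fun p hp => ?_
    rw [← Finset.HasAntidiagonal.mem_antidiagonal.1 hp, neg_pow]
    push_cast
    ring
  have s3 := summable_norm_sum_mul_antidiagonal_of_summable_norm s1 s2
  have t := tsum_mul_tsum_eq_tsum_sum_antidiagonal_of_summable_norm s1 s2
  simp only [e] at s3 t
  refine ⟨?_, s3⟩
  rw [h1.tsum_eq, h2.tsum_eq, ← sub_eq_add_neg] at t
  rw [t]
  exact s3.of_norm.hasSum

lemma integral_cos_int (m : ℤ) (hm : m ≠ 0) : ∫ φ in (0 : ℝ)..Real.pi, Real.cos (m * φ) = 0 := by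
  have hm' : (m : ℝ) ≠ 0 := by exact_mod_cast hm
  rw [intervalIntegral.integral_comp_mul_left _ hm']
  simp [Real.sin_int_mul_pi]

lemma ccf_integral_r (x y : ℝ) (n : ℕ) (r : ℝ) (hr0 : 0 ≤ r) (hr : r < 1) :
    ∫ φ in (0 : ℝ)..Real.pi, ((1 + (r : ℂ) * Complex.exp (φ * Complex.I)) ^ (x : ℂ) *
      (1 - (r : ℂ) * Complex.exp (φ * Complex.I)) ^ (y : ℂ) *
        Complex.exp (-(n * φ * Complex.I))).re = Real.pi * (ccf x y n * r ^ n) := by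
  have hnorm : ∀ φ : ℝ, ‖(r : ℂ) * Complex.exp (φ * Complex.I)‖ = r := by
    intro φ
    rw [norm_mul, Complex.norm_exp_ofReal_mul_I, mul_one, Complex.norm_real, Real.norm_of_nonneg hr0]
  have hterm : ∀ (k : ℕ) (φ : ℝ), (((ccf x y k : ℝ) : ℂ) * ((r : ℂ) * Complex.exp (φ * Complex.I)) ^ k *
      Complex.exp (-(n * φ * Complex.I))).re = ccf x y k * r ^ k * Real.cos (((k : ℤ) - (n : ℤ) : ℤ) * φ) := by
    intro k φ
    have : ((ccf x y k : ℝ) : ℂ) * ((r : ℂ) * Complex.exp (φ * Complex.I)) ^ k *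
      Complex.exp (-(n * φ * Complex.I)) = ((ccf x y k * r ^ k : ℝ) : ℂ) *
        Complex.exp (((((k : ℤ) - (n : ℤ) : ℤ) * φ : ℝ) : ℂ) * Complex.I) := by
      rw [mul_pow, ← Complex.exp_nat_mul]
      push_cast
      have : Complex.exp (((k : ℂ) - n) * φ * Complex.I) =
        Complex.exp (k * (φ * Complex.I)) * Complex.exp (-(n * φ * Complex.I)) := by
        rw [← Complex.exp_add]; congr 1; ring
      rw [this]; ring
    rw [this, Complex.re_ofReal_mul, Complex.exp_ofReal_mul_I_re]
  have hs : Summable (fun k : ℕ => |ccf x y k| * r ^ k) := by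
    have := (ccf_hasSum x y r (by rw [Complex.norm_real, Real.norm_of_nonneg hr0]; exact hr)).2
    refine this.congr fun k => ?_
    rw [norm_mul, norm_pow, Complex.norm_real, Complex.norm_real, Real.norm_of_nonneg hr0,
      Real.norm_eq_abs]
  have H := intervalIntegral.hasSum_integral_of_dominated_convergence (μ := volume) (a := 0)
    (b := Real.pi)
    (F := fun (k : ℕ) (φ : ℝ) => ccf x y k * r ^ k * Real.cos (((k : ℤ) - (n : ℤ) : ℤ) * φ))
    (f := fun φ : ℝ => ((1 + (r : ℂ) * Complex.exp (φ * Complex.I)) ^ (x : ℂ) *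
      (1 - (r : ℂ) * Complex.exp (φ * Complex.I)) ^ (y : ℂ) *
        Complex.exp (-(n * φ * Complex.I))).re)
    (fun k _ => |ccf x y k| * r ^ k)
    (fun k => (by fun_prop : Continuous _).aestronglyMeasurable)
    (fun k => by
      filter_upwards with φ _
      rw [norm_mul, norm_mul, Real.norm_eq_abs, Real.norm_eq_abs, Real.norm_eq_abs,
        abs_of_nonneg (pow_nonneg hr0 k)]
      have := Real.abs_cos_le_one (((k : ℤ) - (n : ℤ) : ℤ) * φ)
      calc _ ≤ |ccf x y k| * r ^ k * 1 := by gcongr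
        _ = _ := mul_one _)
    (by filter_upwards with φ _; exact hs)
    (by simp)
    (by
      filter_upwards with φ _
      have h1 := ((ccf_hasSum x y _ (by rw [hnorm φ]; exact hr)).1.mul_right
        (Complex.exp (-(n * φ * Complex.I))))
      have h2 := Complex.hasSum_re h1
      simpa only [hterm] using h2)
  have hval : ∀ k : ℕ, k ≠ n → ∫ φ in (0 : ℝ)..Real.pi,
      ccf x y k * r ^ k * Real.cos (((k : ℤ) - (n : ℤ) : ℤ) * φ) = 0 := by
    intro k hk
    rw [intervalIntegral.integral_const_mul, integral_cos_int _ (by omega), mul_zero]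
  have h3 := hasSum_single n hval
  rw [H.unique h3]
  simp
  ring

lemma norm_cpow_le_two (w : ℂ) (x : ℝ) (hx : 0 < x) (hw : ‖w‖ ≤ 2) : ‖w ^ (x : ℂ)‖ ≤ 2 ^ x := by
  rw [Complex.norm_cpow_real]
  exact Real.rpow_le_rpow (norm_nonneg _) hw hx.le

lemma one_pm_exp_slit {φ : ℝ} (h0 : 0 < φ) (h1 : φ < Real.pi) :
    0 < (1 + Complex.exp (φ * Complex.I)).re ∧ 0 < (1 - Complex.exp (φ * Complex.I)).re := by
  have e : (Complex.exp (φ * Complex.I)).re = Real.cos φ := Complex.exp_ofReal_mul_I_re φ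
  have h2 : Real.cos φ < 1 := by
    have := Real.cos_lt_cos_of_nonneg_of_le_pi (le_refl 0) h1.le h0
    simpa using this
  have h3 : -1 < Real.cos φ := by
    have := Real.cos_lt_cos_of_nonneg_of_le_pi h0.le (le_refl Real.pi) h1
    simpa using this
  constructor
  · simp only [Complex.add_re, Complex.one_re, e]; linarith
  · simp only [Complex.sub_re, Complex.one_re, e]; linarith

lemma ccf_integral_one (x y : ℝ) (hx : 0 < x) (hy : 0 < y) (n : ℕ) :
    ∫ φ in (0 : ℝ)..Real.pi, ((1 + Complex.exp (φ * Complex.I)) ^ (x : ℂ) *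
      (1 - Complex.exp (φ * Complex.I)) ^ (y : ℂ) *
        Complex.exp (-(n * φ * Complex.I))).re = Real.pi * ccf x y n := by
  set F : ℝ → ℝ → ℝ := fun r φ => ((1 + (r : ℂ) * Complex.exp (φ * Complex.I)) ^ (x : ℂ) *
      (1 - (r : ℂ) * Complex.exp (φ * Complex.I)) ^ (y : ℂ) *
        Complex.exp (-(n * φ * Complex.I))).re with hF
  have hmem : ∀ᶠ r : ℝ in nhdsWithin 1 (Set.Iio 1), r ∈ Set.Ico (0 : ℝ) 1 := by
    have h1 : ∀ᶠ r : ℝ in nhdsWithin 1 (Set.Iio 1), r ∈ Set.Iio (1 : ℝ) := self_mem_nhdsWithin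
    have h2 : ∀ᶠ r : ℝ in nhdsWithin 1 (Set.Iio 1), r ∈ Set.Ioi (0 : ℝ) :=
      nhdsWithin_le_nhds (Ioi_mem_nhds one_pos)
    filter_upwards [h1, h2] with r a b using ⟨le_of_lt b, a⟩
  have hslit : ∀ (r φ : ℝ), r ∈ Set.Ico (0 : ℝ) 1 →
      (1 + (r : ℂ) * Complex.exp (φ * Complex.I)) ∈ Complex.slitPlane ∧
      (1 - (r : ℂ) * Complex.exp (φ * Complex.I)) ∈ Complex.slitPlane := by
    intro r φ hr
    have hn : ‖(r : ℂ) * Complex.exp (φ * Complex.I)‖ < 1 := by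
      rw [norm_mul, Complex.norm_exp_ofReal_mul_I, mul_one, Complex.norm_real,
        Real.norm_of_nonneg hr.1]
      exact hr.2
    constructor
    · exact Complex.mem_slitPlane_of_norm_lt_one hn
    · rw [sub_eq_add_neg]; exact Complex.mem_slitPlane_of_norm_lt_one (by simpa using hn)
  have T : Filter.Tendsto (fun r => ∫ φ in (0 : ℝ)..Real.pi, F r φ) (nhdsWithin 1 (Set.Iio 1))
      (nhds (∫ φ in (0 : ℝ)..Real.pi, F 1 φ)) := by
    apply intervalIntegral.tendsto_integral_filter_of_dominated_convergence
      (fun _ => (2 : ℝ) ^ x * 2 ^ y)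
    · filter_upwards [hmem] with r hr
      refine Continuous.aestronglyMeasurable ?_
      rw [continuous_iff_continuousAt]
      intro φ
      obtain ⟨m1, m2⟩ := hslit r φ hr
      refine Complex.continuous_re.continuousAt.comp ?_
      refine ContinuousAt.mul (ContinuousAt.mul ?_ ?_) (by fun_prop)
      · exact ContinuousAt.cpow (by fun_prop) continuousAt_const m1
      · exact ContinuousAt.cpow (by fun_prop) continuousAt_const m2
    · filter_upwards [hmem] with r hr
      filter_upwards with φ _
      have hn : ‖(r : ℂ) * Complex.exp (φ * Complex.I)‖ ≤ 1 := by
        rw [norm_mul, Complex.norm_exp_ofReal_mul_I, mul_one, Complex.norm_real,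
          Real.norm_of_nonneg hr.1]
        exact hr.2.le
      refine (Complex.abs_re_le_norm _).trans ?_
      have e3 : ‖Complex.exp (-(n * φ * Complex.I))‖ = 1 := by
        have : -((n : ℂ) * φ * Complex.I) = ((-(n * φ) : ℝ) : ℂ) * Complex.I := by push_cast; ring
        rw [this, Complex.norm_exp_ofReal_mul_I]
      rw [norm_mul, norm_mul, e3, mul_one]
      gcongr
      · exact norm_cpow_le_two _ _ hx ((norm_add_le _ _).trans (by rw [norm_one]; linarith))
      · exact norm_cpow_le_two _ _ hy ((norm_sub_le _ _).trans (by rw [norm_one]; linarith))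
    · simp
    · have hne : ∀ᵐ φ : ℝ, φ ≠ Real.pi := by
        simp [ae_iff, measure_singleton]
      filter_upwards [hne] with φ h1 h2
      rw [Set.uIoc_of_le Real.pi_pos.le] at h2
      obtain ⟨g1, g2⟩ := one_pm_exp_slit h2.1 (lt_of_le_of_ne h2.2 h1)
      have : ContinuousAt (fun r : ℝ => F r φ) 1 := by
        simp only [hF]
        refine Complex.continuous_re.continuousAt.comp ?_
        refine ContinuousAt.mul (ContinuousAt.mul ?_ ?_) (by fun_prop)
        · refine ContinuousAt.cpow (by fun_prop) continuousAt_const ?_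
          left; simpa using g1
        · refine ContinuousAt.cpow (by fun_prop) continuousAt_const ?_
          left; simpa using g2
      exact this.tendsto.mono_left nhdsWithin_le_nhds
  have T2 : Filter.Tendsto (fun r => ∫ φ in (0 : ℝ)..Real.pi, F r φ) (nhdsWithin 1 (Set.Iio 1))
      (nhds (Real.pi * (ccf x y n * 1 ^ n))) := by
    have : Filter.Tendsto (fun r : ℝ => Real.pi * (ccf x y n * r ^ n)) (nhdsWithin 1 (Set.Iio 1))
      (nhds (Real.pi * (ccf x y n * 1 ^ n))) := by
      have h : Continuous (fun r : ℝ => Real.pi * (ccf x y n * r ^ n)) := by fun_prop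
      exact h.continuousAt.tendsto.mono_left nhdsWithin_le_nhds
    refine this.congr' ?_
    filter_upwards [hmem] with r hr
    exact (ccf_integral_r x y n r hr.1 hr.2).symm
  have := tendsto_nhds_unique T T2
  simpa [hF] using this

lemma jacobi_zero_ccf (a b : ℝ) (ha : -(1 / 2 : ℝ) < a) (hb : -(1 / 2 : ℝ) < b) (n : ℕ) :
    jacobiP a b n 0 = (1 / 2) ^ n * ccf (n + a) (n + b) n := by
  rw [jacobiP, ccf, ← Finset.sum_flip, Finset.Nat.sum_antidiagonal_eq_sum_range_succ_mk,
    Finset.mul_sum]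
  refine Finset.sum_congr rfl fun s hs => ?_
  have hs' : s ≤ n := by simpa [Nat.lt_succ_iff] using hs
  have c1 : ((n - s : ℕ) : ℝ) = n - s := by rw [Nat.cast_sub hs']
  have p1 : (s : ℝ) ≤ n := by exact_mod_cast hs'
  have p0 : (0 : ℝ) ≤ s := Nat.cast_nonneg s
  simp only
  rw [choose_gamma _ s (by linarith), choose_gamma _ (n - s) (by rw [c1]; linarith), c1]
  have e1 : n - (n - s) = s := by omega
  have e2 : (n : ℝ) - s + a + 1 = n + a - s + 1 := by ring
  have e3 : (n : ℝ) - (n - s) + b + 1 = n + b - (n - s) + 1 := by ring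
  have e4 : (1 / 2 : ℝ) ^ n = (1 / 2) ^ (n - s) * (1 / 2) ^ s := by
    rw [← pow_add]; congr 1; omega
  have e5 : ((0 - 1 : ℝ) / 2) ^ (n - s) = (-1) ^ (n - s) * (1 / 2) ^ (n - s) := by
    rw [← mul_pow]; norm_num
  have e6 : ((0 + 1 : ℝ) / 2) = 1 / 2 := by norm_num
  rw [e1, e2, e3, e4, e5, e6]
  ring

/-- the amplitude -/
noncomputable def Qf (a b : ℝ) (φ : ℝ) : ℂ :=
  (1 + Complex.exp (φ * Complex.I)) ^ (a : ℂ) * (1 - Complex.exp (φ * Complex.I)) ^ (b : ℂ)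

lemma jacobi_zero_integral (a b : ℝ) (ha : -(1 / 2 : ℝ) < a) (hb : -(1 / 2 : ℝ) < b) (n : ℕ)
    (hn : 1 ≤ n) : Real.pi * jacobiP a b n 0 =
      ∫ φ in (0 : ℝ)..Real.pi, ((-Complex.I) ^ n * (((Real.sin φ ^ n : ℝ) : ℂ) * Qf a b φ)).re := by
  have hn' : (1 : ℝ) ≤ n := by exact_mod_cast hn
  rw [jacobi_zero_ccf a b ha hb n, mul_left_comm,
    ← ccf_integral_one _ _ (by linarith) (by linarith), ← intervalIntegral.integral_const_mul]
  refine intervalIntegral.integral_congr_ae ?_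
  have hne : ∀ᵐ φ : ℝ, φ ≠ Real.pi := by
    simp [ae_iff, measure_singleton]
  filter_upwards [hne] with φ h1 h2
  rw [Set.uIoc_of_le Real.pi_pos.le] at h2
  obtain ⟨g1, g2⟩ := one_pm_exp_slit h2.1 (lt_of_le_of_ne h2.2 h1)
  have n1 : (1 + Complex.exp (φ * Complex.I)) ≠ 0 := by
    intro h; rw [h] at g1; simp at g1
  have n2 : (1 - Complex.exp (φ * Complex.I)) ≠ 0 := by
    intro h; rw [h] at g2; simp at g2
  rw [← Complex.re_ofReal_mul]
  congr 1
  rw [Qf]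
  push_cast
  rw [Complex.cpow_add _ _ n1, Complex.cpow_add _ _ n2, Complex.cpow_natCast, Complex.cpow_natCast]
  have e1 : Complex.exp (-(n * φ * Complex.I)) = (Complex.exp (-φ * Complex.I)) ^ n := by
    rw [← Complex.exp_nat_mul]; congr 1; ring
  have e2 : Complex.exp (φ * Complex.I) * Complex.exp (-φ * Complex.I) = 1 := by
    rw [← Complex.exp_add]; simp
  have e3 : (-Complex.I) * Complex.sin φ = 1 / 2 * ((1 + Complex.exp (φ * Complex.I)) *
      (1 - Complex.exp (φ * Complex.I)) * Complex.exp (-φ * Complex.I)) := by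
    rw [Complex.sin]
    linear_combination (-(Complex.exp (-φ * Complex.I) - Complex.exp (φ * Complex.I)) / 2) *
      Complex.I_mul_I + (1 / 2 * Complex.exp (φ * Complex.I)) * e2
  have e4 : (-Complex.I) ^ n * Complex.sin φ ^ n = (1 / 2) ^ n *
      ((1 + Complex.exp (φ * Complex.I)) ^ n *
      (1 - Complex.exp (φ * Complex.I)) ^ n * Complex.exp (-φ * Complex.I) ^ n) := by
    rw [← mul_pow, e3, mul_pow, mul_pow, mul_pow]
  rw [e1, ← mul_assoc ((-Complex.I) ^ n), e4]
  ring

/-- Wallis integrals -/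
noncomputable def Wn (n : ℕ) : ℝ := ∫ φ in (0 : ℝ)..Real.pi, Real.sin φ ^ n

lemma Wn_pos (n : ℕ) : 0 < Wn n := integral_sin_pow_pos n

lemma Wn_rec (n : ℕ) : ((n : ℝ) + 2) * Wn (n + 2) = (n + 1) * Wn n := by
  have h := integral_sin_pow (a := 0) (b := Real.pi) n
  simp only [Real.sin_zero, Real.sin_pi, ne_eq, Nat.succ_ne_zero, not_false_eq_true, zero_pow,
    zero_mul, sub_zero, zero_div, zero_add] at h
  rw [Wn, Wn, h]
  field_simp

lemma Wn_mul (n : ℕ) : ((n : ℝ) + 1) * (Wn n * Wn (n + 1)) = 2 * Real.pi := by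
  induction n with
  | zero => simp [Wn, integral_sin]; ring
  | succ n ih =>
    have h := Wn_rec n
    push_cast
    have e : (n : ℝ) + 1 + 1 = n + 2 := by ring
    rw [e]
    linear_combination Wn (n + 1) * h + ih

lemma Wn_le (n : ℕ) : Wn (n + 1) ≤ Wn n := integral_sin_pow_succ_le n

lemma Wn_logconvex (n : ℕ) : Wn (n + 1) ^ 2 ≤ Wn n * Wn (n + 2) := by
  have hnn : 0 ≤ ∫ φ in (0 : ℝ)..Real.pi,
      Real.sin φ ^ n * (Wn (n + 1) - Wn n * Real.sin φ) ^ 2 := by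
    apply intervalIntegral.integral_nonneg Real.pi_pos.le
    intro φ hφ
    exact mul_nonneg (pow_nonneg (Real.sin_nonneg_of_mem_Icc hφ) n) (sq_nonneg _)
  have e : ∫ φ in (0 : ℝ)..Real.pi, Real.sin φ ^ n * (Wn (n + 1) - Wn n * Real.sin φ) ^ 2 =
      Wn (n + 1) ^ 2 * Wn n - 2 * Wn (n + 1) * Wn n * Wn (n + 1) + Wn n ^ 2 * Wn (n + 2) := by
    have : ∀ φ : ℝ, Real.sin φ ^ n * (Wn (n + 1) - Wn n * Real.sin φ) ^ 2 =
        Wn (n + 1) ^ 2 * Real.sin φ ^ n - 2 * Wn (n + 1) * Wn n * Real.sin φ ^ (n + 1) +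
          Wn n ^ 2 * Real.sin φ ^ (n + 2) := by
      intro φ; ring
    simp only [this]
    rw [intervalIntegral.integral_add, intervalIntegral.integral_sub,
      intervalIntegral.integral_const_mul, intervalIntegral.integral_const_mul,
      intervalIntegral.integral_const_mul]
    · rfl
    all_goals exact (by fun_prop : Continuous _).intervalIntegrable _ _
  rw [e] at hnn
  have h := Wn_pos n
  by_contra hc
  push Not at hc
  nlinarith

lemma Wn_bounds (m : ℕ) : 4 * Real.pi ^ 2 * (m + 3) / (m + 2) ^ 3 ≤ Wn (m + 1) ^ 4 ∧
    Wn (m + 1) ^ 4 ≤ 4 * Real.pi ^ 2 / ((m + 1) * (m + 2)) := by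
  have p0 := Wn_pos m
  have p1 := Wn_pos (m + 1)
  have p2 := Wn_pos (m + 2)
  have p3 := Wn_pos (m + 3)
  have m0 := Wn_mul m
  have m1 := Wn_mul (m + 1)
  have m2 := Wn_mul (m + 2)
  have l1 := Wn_logconvex m
  have l2 := Wn_logconvex (m + 1)
  have r1 := Wn_rec (m + 1)
  push_cast at *
  rw [show m + 1 + 1 = m + 2 by ring] at m1 l2
  rw [show m + 1 + 2 = m + 3 by ring] at r1 l2
  have hm : (0 : ℝ) ≤ m := Nat.cast_nonneg m
  constructor
  · have h1 : Wn (m + 1) ^ 4 * ((m : ℝ) + 2) ^ 3 =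
        ((m : ℝ) + 3) * (Wn (m + 1) * Wn (m + 3)) * ((m + 2) ^ 2 * Wn (m + 1) ^ 2) := by
      linear_combination (-(Wn (m + 1) ^ 3 * ((m : ℝ) + 2) ^ 2)) * r1
    have h2 : ((m : ℝ) + 2) * (Wn (m + 1) * Wn (m + 2)) = 2 * Real.pi := by
      rw [← m1]; ring
    rw [div_le_iff₀ (by positivity), h1]
    have : 4 * Real.pi ^ 2 * ((m : ℝ) + 3) = (m + 3) * Wn (m + 2) ^ 2 *
      ((m + 2) ^ 2 * Wn (m + 1) ^ 2) := by
      linear_combination (-((m : ℝ) + 3) * (((m : ℝ) + 2) * (Wn (m + 1) * Wn (m + 2)) + 2 * Real.pi)) * h2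
    rw [this]
    gcongr
  · rw [le_div_iff₀ (by positivity)]
    calc Wn (m + 1) ^ 4 * (((m : ℝ) + 1) * (m + 2)) = Wn (m + 1) ^ 2 *
          (Wn (m + 1) ^ 2 * (((m : ℝ) + 1) * (m + 2))) := by ring
      _ ≤ Wn (m + 1) ^ 2 * ((Wn m * Wn (m + 2)) * (((m : ℝ) + 1) * (m + 2))) := by gcongr
      _ = (((m : ℝ) + 1) * (Wn m * Wn (m + 1))) * (((m : ℝ) + 1 + 1) * (Wn (m + 1) * Wn (m + 2))) := by ring
      _ = 4 * Real.pi ^ 2 := by rw [m0, m1]; ring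

set_option maxHeartbeats 1000000 in
lemma Wn_asymp (g : ℝ) (hg : -(1 / 2 : ℝ) < g) : ∃ K : ℝ, 0 ≤ K ∧ ∀ n : ℕ, 1 ≤ n →
    |√((n + g + 1 / 2) / (2 * Real.pi)) * Wn n - (1 + g / (2 * (n + g + 1 / 2)))| ≤
      K / (n + g + 1 / 2) ^ 2 := by
  set h : ℝ := g + 1 / 2 with hh
  have hpos : 0 < h := by rw [hh]; linarith
  set K1 : ℝ := |h * (h - 1) - 4 * g ^ 2| + |2 * g * h * (h - 1)| with hK1
  have hK1p : 0 ≤ K1 := by positivity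
  set K2 : ℝ := 6 * g ^ 2 + 2 * |g| ^ 3 + g ^ 4  with hK2
  have hK2p : 0 ≤ K2 := by positivity
  refine ⟨8 * (K1 * (1 + h) ^ 2 + (1 + h) ^ 4 + K2), by positivity, fun n hn => ?_⟩
  obtain ⟨m, rfl⟩ : ∃ m, n = m + 1 := ⟨n - 1, by omega⟩
  obtain ⟨w1, w2⟩ := Wn_bounds m
  have wp := Wn_pos (m + 1)
  set W := Wn (m + 1) with hW
  push_cast
  have hm : (0 : ℝ) ≤ m := Nat.cast_nonneg m
  set x : ℝ := (m : ℝ) + 1 with hx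
  have hx1 : 1 ≤ x := by linarith
  have hN : x + g + 1 / 2 = x + h := by rw [hh]; ring
  rw [hN]
  set N : ℝ := x + h with hNdef
  have hN1 : 1 ≤ N := by linarith
  have hNx : N ≤ (1 + h) * x := by nlinarith
  have e2 : (m : ℝ) + 2 = x + 1 := by rw [hx]; ring
  have e3 : (m : ℝ) + 3 = x + 2 := by rw [hx]; ring
  rw [e2, e3] at w1
  rw [e2] at w2
  set A := √(N / (2 * Real.pi)) * W with hA
  set B := 1 + g / (2 * N) with hB
  have hpi := Real.pi_pos
  have hA4 : A ^ 4 = N ^ 2 * W ^ 4 / (4 * Real.pi ^ 2) := by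
    have : √(N / (2 * Real.pi)) ^ 4 = (N / (2 * Real.pi)) ^ 2 := by
      rw [show (4 : ℕ) = 2 * 2 by norm_num, pow_mul, Real.sq_sqrt (by positivity)]
    rw [hA, mul_pow, this]; field_simp; norm_num
  set X := N ^ 2 / (x * (x + 1)) with hX
  have hAX : A ^ 4 ≤ X := by
    rw [hA4, hX, div_le_div_iff₀ (by positivity) (by positivity)]
    rw [le_div_iff₀ (by positivity)] at w2
    nlinarith [sq_nonneg N]
  have hAX2 : X - X / (x + 1) ^ 2 ≤ A ^ 4 := by
    have : X - X / (x + 1) ^ 2 = N ^ 2 * (x + 2) / (x + 1) ^ 3 := by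
      rw [hX]; field_simp; ring
    rw [this, hA4, div_le_div_iff₀ (by positivity) (by positivity)]
    rw [div_le_iff₀ (by positivity)] at w1
    nlinarith [sq_nonneg N]
  have hXb : X / (x + 1) ^ 2 ≤ (1 + h) ^ 4 / N ^ 2 := by
    rw [hX, div_div, div_le_div_iff₀ (by positivity) (by positivity)]
    have : N ^ 2 * N ^ 2 ≤ ((1 + h) * x) ^ 2 * ((1 + h) * x) ^ 2 := by gcongr
    refine this.trans ?_
    have : ((1 + h) * x) ^ 2 * ((1 + h) * x) ^ 2 = (1 + h) ^ 4 * (x * x * x ^ 2) := by ring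
    rw [this]
    gcongr <;> linarith
  have hXd : |X - (1 + 2 * g / N)| ≤ K1 * (1 + h) ^ 2 / N ^ 2 := by
    have : X - (1 + 2 * g / N) =
        -((h * (h - 1) - 4 * g ^ 2) * N + 2 * g * h * (h - 1)) / (N * (x * (x + 1))) := by
      have hxe : x = N - h := by rw [hNdef]; ring
      have hne : x ≠ 0 := by positivity
      have hne2 : x + 1 ≠ 0 := by positivity
      have hne3 : N ≠ 0 := by positivity
      rw [hX]
      field_simp
      have hge : g = h - 1 / 2 := by rw [hh]; ring
      rw [hxe, hge]; ring
    rw [this, abs_div, abs_neg, abs_of_pos (show 0 < N * (x * (x + 1)) by positivity),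
      div_le_div_iff₀ (by positivity) (by positivity)]
    have t1 : |(h * (h - 1) - 4 * g ^ 2) * N + 2 * g * h * (h - 1)| ≤ K1 * N := by
      refine (abs_add_le _ _).trans ?_
      have v1 : |(h * (h - 1) - 4 * g ^ 2) * N| = |h * (h - 1) - 4 * g ^ 2| * N := by
        rw [abs_mul, abs_of_pos (show 0 < N by linarith)]
      have v2 : |2 * g * h * (h - 1)| ≤ |2 * g * h * (h - 1)| * N :=
        le_mul_of_one_le_right (abs_nonneg _) hN1
      rw [v1, hK1, add_mul]
      linarith
    have t2 : N ^ 2 ≤ (1 + h) ^ 2 * (x * (x + 1)) := by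
      calc N ^ 2 ≤ ((1 + h) * x) ^ 2 := by gcongr
        _ = (1 + h) ^ 2 * (x * x) := by ring
        _ ≤ _ := by gcongr; linarith
    calc _ ≤ K1 * N * ((1 + h) ^ 2 * (x * (x + 1))) := by gcongr
      _ = _ := by ring
  have hBd : |B ^ 4 - (1 + 2 * g / N)| ≤ K2 / N ^ 2 := by
    have : B ^ 4 - (1 + 2 * g / N) = (3 / 2 * g ^ 2 + g ^ 3 / (2 * N) + g ^ 4 / (16 * N ^ 2)) / N ^ 2 := by
      rw [hB]; field_simp; ring
    rw [this, abs_div, abs_of_pos (show 0 < N ^ 2 by positivity)]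
    gcongr
    refine (abs_add_le _ _).trans ((add_le_add_left (abs_add_le _ _) _).trans ?_)
    rw [abs_div, abs_div, abs_pow, abs_pow g 4, abs_of_pos (show 0 < 2 * N by positivity),
      abs_of_pos (show 0 < 16 * N ^ 2 by positivity), abs_of_nonneg (show 0 ≤ 3 / 2 * g ^ 2 by positivity), hK2]
    have a4 : |g| ^ 4 = g ^ 4 := by rw [← abs_pow, abs_of_nonneg (by positivity)]
    have u1 : |g| ^ 3 / (2 * N) ≤ |g| ^ 3 := div_le_self (by positivity) (by linarith)
    have u2 : |g| ^ 4 / (16 * N ^ 2) ≤ |g| ^ 4 := div_le_self (by positivity) (by nlinarith)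
    rw [a4] at u2 ⊢
    have := sq_nonneg g
    have : 0 ≤ |g| ^ 3 := by positivity
    linarith
  have hBh : 1 / 2 ≤ B := by
    have : B = (N + g / 2) / N := by rw [hB]; field_simp
    rw [this, le_div_iff₀ (by linarith)]
    rw [hNdef, hh]; linarith
  have hAp : 0 ≤ A := by positivity
  have hfin : |A ^ 4 - B ^ 4| ≤ (K1 * (1 + h) ^ 2 + (1 + h) ^ 4 + K2) / N ^ 2 := by
    rw [add_div, add_div]
    rw [abs_le] at hXd hBd ⊢
    have : 0 ≤ (1 + h) ^ 4 / N ^ 2 := by positivity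
    constructor <;> linarith
  have key : |A - B| * (1 / 8) ≤ |A ^ 4 - B ^ 4| := by
    have : A ^ 4 - B ^ 4 = (A - B) * ((A + B) * (A ^ 2 + B ^ 2)) := by ring
    rw [this, abs_mul]
    gcongr
    have q1 : 1 / 2 ≤ A + B := by linarith
    have q2 : 1 / 4 ≤ A ^ 2 + B ^ 2 := by nlinarith
    refine le_trans ?_ (le_abs_self _)
    calc (1 / 8 : ℝ) = 1 / 2 * (1 / 4) := by norm_num
      _ ≤ _ := mul_le_mul q1 q2 (by norm_num) (by linarith)
  have : |A - B| ≤ 8 * ((K1 * (1 + h) ^ 2 + (1 + h) ^ 4 + K2) / N ^ 2) := by linarith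
  rwa [mul_div_assoc]

lemma Wn_cos4 (m : ℕ) : ∫ φ in (0 : ℝ)..Real.pi, Real.sin φ ^ m * Real.cos φ ^ 4 =
    3 * Wn m / ((m + 2) * (m + 4)) := by
  have : ∀ φ : ℝ, Real.sin φ ^ m * Real.cos φ ^ 4 =
      Real.sin φ ^ m - 2 * Real.sin φ ^ (m + 2) + Real.sin φ ^ (m + 4) := by
    intro φ
    have h : Real.cos φ ^ 4 = (1 - Real.sin φ ^ 2) ^ 2 := by rw [← Real.cos_sq']; ring
    rw [h]; ring
  simp only [this]
  rw [intervalIntegral.integral_add, intervalIntegral.integral_sub,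
      intervalIntegral.integral_const_mul]
  · change Wn m - 2 * Wn (m + 2) + Wn (m + 4) = _
    have r1 := Wn_rec m
    have r2 := Wn_rec (m + 2)
    push_cast at r2
    have : Wn (m + 2) = (m + 1) / (m + 2) * Wn m := by field_simp; linarith
    have h4 : Wn (m + 4) = (m + 3) / (m + 4) * Wn (m + 2) := by
      rw [show m + 2 + 2 = m + 4 by ring] at r2
      field_simp; linarith
    rw [h4, this]; field_simp; ring
  all_goals exact (by fun_prop : Continuous _).intervalIntegrable _ _

lemma Wn_cos2 (m : ℕ) : ∫ φ in (0 : ℝ)..Real.pi, Real.sin φ ^ m * Real.cos φ ^ 2 =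
    Wn m / (m + 2) := by
  have : ∀ φ : ℝ, Real.sin φ ^ m * Real.cos φ ^ 2 =
      Real.sin φ ^ m - Real.sin φ ^ (m + 2) := by
    intro φ
    rw [Real.cos_sq']; ring
  simp only [this]
  rw [intervalIntegral.integral_sub]
  · change Wn m - Wn (m + 2) = _
    have r1 := Wn_rec m
    have : Wn (m + 2) = (m + 1) / (m + 2) * Wn m := by field_simp; linarith
    rw [this]; field_simp; ring
  all_goals exact (by fun_prop : Continuous _).intervalIntegrable _ _

/-- complexified amplitude centred at `π/2` -/
noncomputable def Gf (a b : ℝ) (z : ℂ) : ℂ :=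
  (1 + Complex.I * Complex.exp (Complex.I * z)) ^ (a : ℂ) *
    (1 - Complex.I * Complex.exp (Complex.I * z)) ^ (b : ℂ)

noncomputable def GLf (a b : ℝ) (z : ℂ) : ℂ :=
  -a * (Complex.exp (Complex.I * z) / (1 + Complex.I * Complex.exp (Complex.I * z))) +
    b * (Complex.exp (Complex.I * z) / (1 - Complex.I * Complex.exp (Complex.I * z)))

lemma Gbase_deriv (z : ℂ) :
    HasDerivAt (fun z : ℂ => Complex.exp (Complex.I * z)) (Complex.I * Complex.exp (Complex.I * z)) z ∧
    HasDerivAt (fun z : ℂ => 1 + Complex.I * Complex.exp (Complex.I * z))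
      (-Complex.exp (Complex.I * z)) z ∧
    HasDerivAt (fun z : ℂ => 1 - Complex.I * Complex.exp (Complex.I * z))
      (Complex.exp (Complex.I * z)) z := by
  have h : HasDerivAt (fun z : ℂ => Complex.exp (Complex.I * z))
      (Complex.I * Complex.exp (Complex.I * z)) z := by
    have := ((hasDerivAt_id z).const_mul Complex.I).cexp
    refine this.congr_deriv ?_
    simp; ring
  refine ⟨h, ?_, ?_⟩
  · refine ((h.const_mul Complex.I).const_add 1).congr_deriv ?_
    rw [← mul_assoc, Complex.I_mul_I]; ring
  · refine ((h.const_mul Complex.I).const_sub 1).congr_deriv ?_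
    rw [← mul_assoc, Complex.I_mul_I]; ring

lemma Gf_deriv (a b : ℝ) (z : ℂ)
    (h1 : 1 + Complex.I * Complex.exp (Complex.I * z) ∈ Complex.slitPlane)
    (h2 : 1 - Complex.I * Complex.exp (Complex.I * z) ∈ Complex.slitPlane) :
    HasDerivAt (Gf a b) (Gf a b z * GLf a b z) z := by
  obtain ⟨_, d1, d2⟩ := Gbase_deriv z
  have n1 := Complex.slitPlane_ne_zero h1
  have n2 := Complex.slitPlane_ne_zero h2
  have := (d1.cpow_const (c := (a : ℂ)) h1).mul (d2.cpow_const (c := (b : ℂ)) h2)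
  refine this.congr_deriv ?_
  rw [Gf, GLf, Complex.cpow_sub _ _ n1, Complex.cpow_sub _ _ n2, Complex.cpow_one, Complex.cpow_one]
  field_simp

lemma GL_deriv_zero (a b : ℝ) : HasDerivAt (GLf a b) (-((a + b) / 2 : ℂ)) 0 := by
  obtain ⟨d0, d1, d2⟩ := Gbase_deriv 0
  have n1 : (1 : ℂ) + Complex.I * Complex.exp (Complex.I * 0) ≠ 0 := by
    intro h; have := congrArg Complex.re h; simp at this
  have n2 : (1 : ℂ) - Complex.I * Complex.exp (Complex.I * 0) ≠ 0 := by
    intro h; have := congrArg Complex.re h; simp at this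
  have := ((d0.div d1 n1).const_mul (-(a : ℂ))).add ((d0.div d2 n2).const_mul (b : ℂ))
  refine this.congr_deriv ?_
  simp only [mul_zero, Complex.exp_zero, mul_one] at n1 n2 ⊢
  have e1 : (1 + Complex.I) ^ 2 = 2 * Complex.I := by
    linear_combination Complex.I_mul_I
  have e2 : (1 - Complex.I) ^ 2 = -2 * Complex.I := by
    linear_combination Complex.I_mul_I
  have hI := Complex.I_ne_zero
  rw [e1, e2]
  field_simp
  linear_combination (-(a : ℂ) + b) * Complex.I_mul_I

lemma GL_zero (a b : ℝ) : GLf a b 0 = (b - a) / 2 + Complex.I * ((a + b) / 2) := by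
  have n1 : (1 : ℂ) + Complex.I  ≠ 0 := by
    intro h; have := congrArg Complex.re h; simp at this
  have n2 : (1 : ℂ) - Complex.I ≠ 0 := by
    intro h; have := congrArg Complex.re h; simp at this
  have e1 : 1 / (1 + Complex.I) = (1 - Complex.I) / 2 := by
    field_simp; linear_combination Complex.I_mul_I
  have e2 : 1 / (1 - Complex.I) = (1 + Complex.I) / 2 := by
    field_simp; linear_combination Complex.I_mul_I
  simp only [GLf, mul_zero, Complex.exp_zero, mul_one, e1, e2]
  ring

noncomputable def Q2c (a b : ℝ) : ℂ :=
  ((b - a) / 2 + Complex.I * ((a + b) / 2)) ^ 2 - (a + b) / 2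

lemma Gslit : (1 + Complex.I * Complex.exp (Complex.I * 0) ∈ Complex.slitPlane) ∧
    (1 - Complex.I * Complex.exp (Complex.I * 0) ∈ Complex.slitPlane) := by
  constructor <;> left <;> simp

lemma Gf_symm (a b : ℝ) :
    (fun z : ℂ => Gf a b z + Gf a b (-z) - 2 * Gf a b 0 - Gf a b 0 * Q2c a b * z ^ 2)
      =O[nhds 0] fun z : ℂ => ‖z‖ ^ 4 := by
  obtain ⟨s1, s2⟩ := Gslit
  have ev : ∀ᶠ z : ℂ in nhds 0, HasDerivAt (Gf a b) (Gf a b z * GLf a b z) z := by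
    have c1 : ContinuousAt (fun z : ℂ => 1 + Complex.I * Complex.exp (Complex.I * z)) 0 := by fun_prop
    have c2 : ContinuousAt (fun z : ℂ => 1 - Complex.I * Complex.exp (Complex.I * z)) 0 := by fun_prop
    have v1 := c1.preimage_mem_nhds (Complex.isOpen_slitPlane.mem_nhds s1)
    have v2 := c2.preimage_mem_nhds (Complex.isOpen_slitPlane.mem_nhds s2)
    filter_upwards [v1, v2] with z h1 h2 using Gf_deriv a b z h1 h2
  have han : AnalyticAt ℂ (Gf a b) 0 := by
    have c1 : AnalyticAt ℂ (fun z : ℂ => 1 + Complex.I * Complex.exp (Complex.I * z)) 0 := by fun_prop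
    have c2 : AnalyticAt ℂ (fun z : ℂ => 1 - Complex.I * Complex.exp (Complex.I * z)) 0 := by fun_prop
    exact (c1.cpow analyticAt_const s1).mul (c2.cpow analyticAt_const s2)
  have i2 : iteratedDeriv 2 (Gf a b) 0 = Gf a b 0 * Q2c a b := by
    rw [show (2 : ℕ) = 1 + 1 from rfl, iteratedDeriv_succ, iteratedDeriv_one]
    have : deriv (Gf a b) =ᶠ[nhds 0] fun z => Gf a b z * GLf a b z := by
      filter_upwards [ev] with z hz using hz.deriv
    rw [this.deriv_eq]
    have h := (ev.self_of_nhds.mul (GL_deriv_zero a b)).deriv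
    refine h.trans ?_
    rw [Q2c, GL_zero]
    ring
  have T := han.hasFPowerSeriesAt.isBigO_sub_partialSum_pow 4
  have T2 : (fun z : ℂ => Gf a b (0 + -z) - (FormalMultilinearSeries.ofScalars ℂ
      (fun n ↦ iteratedDeriv n (Gf a b) 0 / n.factorial)).partialSum 4 (-z))
      =O[nhds 0] fun z : ℂ => ‖z‖ ^ 4 := by
    have ht : Filter.Tendsto (fun z : ℂ => -z) (nhds 0) (nhds 0) := by
      have : ContinuousAt (fun z : ℂ => -z) 0 := by fun_prop
      simpa using this.tendsto
    have := T.comp_tendsto ht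
    simpa [Function.comp_def] using this
  refine (T.add T2).congr_left fun z => ?_
  simp only [FormalMultilinearSeries.partialSum, Finset.sum_range_succ, Finset.sum_range_zero,
    FormalMultilinearSeries.ofScalars_apply_eq, i2, smul_eq_mul, iteratedDeriv_zero]
  simp [Nat.factorial]
  ring

lemma Qf_eq_Gf (a b : ℝ) (x : ℝ) : Qf a b (Real.pi / 2 + x) = Gf a b x := by
  have : Complex.exp (((Real.pi / 2 + x : ℝ) : ℂ) * Complex.I) =
      Complex.I * Complex.exp (Complex.I * x) := by
    push_cast
    rw [add_mul, Complex.exp_add, Complex.exp_pi_div_two_mul_I, mul_comm (x : ℂ)]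
  rw [Qf, Gf, this]

lemma Qf_norm_sin (a b : ℝ) (ha : -(1 / 2 : ℝ) < a) (hb : -(1 / 2 : ℝ) < b) {φ : ℝ} (h0 : 0 < φ)
    (h1 : φ < Real.pi) : ‖Qf a b φ‖ * Real.sin φ ≤ 2 ^ (a + 1) * 2 ^ (b + 1) := by
  obtain ⟨g1, g2⟩ := one_pm_exp_slit h0 h1
  have n1 : (1 + Complex.exp (φ * Complex.I)) ≠ 0 := by
    intro h; rw [h] at g1; simp at g1
  have n2 : (1 - Complex.exp (φ * Complex.I)) ≠ 0 := by
    intro h; rw [h] at g2; simp at g2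
  have e2 : Complex.exp (φ * Complex.I) * Complex.exp (-φ * Complex.I) = 1 := by
    rw [← Complex.exp_add]; simp
  have e3 : (-Complex.I) * Complex.sin φ = 1 / 2 * ((1 + Complex.exp (φ * Complex.I)) *
      (1 - Complex.exp (φ * Complex.I)) * Complex.exp (-φ * Complex.I)) := by
    rw [Complex.sin]
    linear_combination (-(Complex.exp (-φ * Complex.I) - Complex.exp (φ * Complex.I)) / 2) *
      Complex.I_mul_I + (1 / 2 * Complex.exp (φ * Complex.I)) * e2
  have hs : 0 < Real.sin φ := Real.sin_pos_of_pos_of_lt_pi h0 h1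
  have e4 : Real.sin φ = 1 / 2 * (‖1 + Complex.exp (φ * Complex.I)‖ * ‖1 - Complex.exp (φ * Complex.I)‖) := by
    have := congrArg norm e3
    have hn : ‖Complex.exp (-φ * Complex.I)‖ = 1 := by
      rw [← Complex.ofReal_neg, Complex.norm_exp_ofReal_mul_I]
    rw [norm_mul, norm_mul, norm_mul, norm_mul, hn, ← Complex.ofReal_sin, Complex.norm_real,
      Real.norm_of_nonneg hs.le] at this
    simpa using this
  have p1 := norm_pos_iff.2 n1
  have p2 := norm_pos_iff.2 n2
  have l0 : ‖Complex.exp (φ * Complex.I)‖ = 1 := Complex.norm_exp_ofReal_mul_I φ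
  have l1 : ‖1 + Complex.exp (φ * Complex.I)‖ ≤ 2 := (norm_add_le _ _).trans (by rw [norm_one, l0]; norm_num)
  have l2 : ‖1 - Complex.exp (φ * Complex.I)‖ ≤ 2 := (norm_sub_le _ _).trans (by rw [norm_one, l0]; norm_num)
  rw [Qf, norm_mul, Complex.norm_cpow_real, Complex.norm_cpow_real, e4]
  set u := ‖1 + Complex.exp (φ * Complex.I)‖
  set v := ‖1 - Complex.exp (φ * Complex.I)‖
  have t1 : u ^ a * u = u ^ (a + 1) := by rw [Real.rpow_add p1, Real.rpow_one]
  have t2 : v ^ b * v = v ^ (b + 1) := by rw [Real.rpow_add p2, Real.rpow_one]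
  have : u ^ a * v ^ b * (1 / 2 * (u * v)) = 1 / 2 * (u ^ (a + 1) * v ^ (b + 1)) := by
    rw [← t1, ← t2]; ring
  rw [this]
  have t3 : u ^ (a + 1) ≤ 2 ^ (a + 1) := Real.rpow_le_rpow p1.le l1 (by linarith)
  have t4 : v ^ (b + 1) ≤ 2 ^ (b + 1) := Real.rpow_le_rpow p2.le l2 (by linarith)
  have t5 : u ^ (a + 1) * v ^ (b + 1) ≤ 2 ^ (a + 1) * 2 ^ (b + 1) := by gcongr
  have t6 : 0 ≤ u ^ (a + 1) * v ^ (b + 1) := by positivity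
  linarith

noncomputable def Ef (a b φ : ℝ) : ℂ :=
  Qf a b φ + Qf a b (Real.pi - φ) - 2 * Gf a b 0 - Gf a b 0 * Q2c a b * ((Real.cos φ ^ 2 : ℝ) : ℂ)

lemma Ef_bound (a b : ℝ) (ha : -(1 / 2 : ℝ) < a) (hb : -(1 / 2 : ℝ) < b) : ∃ K : ℝ, 0 ≤ K ∧
    ∀ φ : ℝ, 0 < φ → φ < Real.pi → ‖Ef a b φ‖ * Real.sin φ ≤ K * Real.cos φ ^ 4 := by
  obtain ⟨c, hc, hO⟩ := (Gf_symm a b).exists_pos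
  rw [Asymptotics.IsBigOWith] at hO
  obtain ⟨δ0, hδ0, hball⟩ := Metric.eventually_nhds_iff.1 hO
  set δ := min δ0 1 with hδ
  have hδp : 0 < δ := lt_min hδ0 one_pos
  have hδ1 : δ ≤ 1 := min_le_right _ _
  set M : ℝ := 2 * (2 ^ (a + 1) * 2 ^ (b + 1)) + ‖2 * Gf a b 0‖ + ‖Gf a b 0 * Q2c a b‖ with hM
  have hMp : 0 ≤ M := by positivity
  have hsd : 0 < Real.sin δ := Real.sin_pos_of_pos_of_lt_pi hδp (by linarith [Real.pi_gt_three])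
  set D := ‖Gf a b 0 * Q2c a b‖ with hD
  refine ⟨(c + D) * (Real.pi / 2) ^ 4 + M / Real.sin δ ^ 4, by positivity, fun φ h0 h1 => ?_⟩
  have hs : 0 < Real.sin φ := Real.sin_pos_of_pos_of_lt_pi h0 h1
  have hs1 : Real.sin φ ≤ 1 := Real.sin_le_one φ
  set x := φ - Real.pi / 2 with hx
  have hφ : φ = Real.pi / 2 + x := by rw [hx]; ring
  have hφ' : Real.pi - φ = Real.pi / 2 + -x := by rw [hx]; ring
  have hcos : Real.cos φ = - Real.sin x := by rw [hφ, add_comm, Real.cos_add_pi_div_two]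
  have hxa : |x| ≤ Real.pi / 2 := by rw [abs_le]; constructor <;> linarith
  have hcos4 : Real.cos φ ^ 4 = Real.sin |x| ^ 4 := by
    rw [hcos]
    rcases abs_cases x with ⟨h, _⟩ | ⟨h, _⟩ <;> rw [h]
    · ring
    · rw [Real.sin_neg]
  have hc4 : 0 ≤ Real.cos φ ^ 4 := by positivity
  have hjordan : 2 / Real.pi * |x| ≤ Real.sin |x| := Real.mul_le_sin (abs_nonneg x) hxa
  have hj4 : |x| ^ 4 ≤ (Real.pi / 2) ^ 4 * Real.cos φ ^ 4 := by
    rw [hcos4, ← mul_pow]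
    gcongr
    have hpi := Real.pi_pos
    have : |x| = Real.pi / 2 * (2 / Real.pi * |x|) := by field_simp
    calc |x| = Real.pi / 2 * (2 / Real.pi * |x|) := this
      _ ≤ _ := by gcongr
  rcases lt_or_ge |x| δ with hlt | hge
  · have hb1 := @hball (x : ℂ) (by
      rw [dist_zero_right, Complex.norm_real, Real.norm_eq_abs]; exact lt_of_lt_of_le hlt (min_le_left _ _))
    simp only [Complex.norm_real, Real.norm_eq_abs, abs_pow, abs_abs] at hb1
    have hE : Ef a b φ = (Gf a b x + Gf a b (-x) - 2 * Gf a b 0 - Gf a b 0 * Q2c a b * (x : ℂ) ^ 2) +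
        Gf a b 0 * Q2c a b * ((x ^ 2 - Real.sin x ^ 2 : ℝ) : ℂ) := by
      rw [Ef, hcos, hφ', Qf_eq_Gf]
      conv_lhs => rw [hφ, Qf_eq_Gf]
      push_cast
      ring
    have hsq : |x ^ 2 - Real.sin x ^ 2| ≤ |x| ^ 4 := by
      have a1 : |Real.sin x| ≤ |x| := Real.abs_sin_le_abs
      have a2 : Real.sin x ^ 2 ≤ x ^ 2 := sq_le_sq.2 a1
      rw [abs_of_nonneg (by linarith)]
      have hx1 : |x| ≤ 1 := by linarith
      have s2 : Real.sin x ^ 2 = Real.sin |x| ^ 2 := by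
        rcases abs_cases x with ⟨h, _⟩ | ⟨h, _⟩ <;> rw [h]
        rw [Real.sin_neg]; ring
      rw [s2, ← sq_abs x]
      rcases eq_or_lt_of_le (abs_nonneg x) with h | h
      · rw [← h]; simp
      · have a3 := Real.sin_gt_sub_cube h
        have a4 : 0 ≤ |x| - |x| ^ 3 / 6 := by
          have : |x| ^ 3 ≤ |x| := by
            calc |x| ^ 3 = |x| * (|x| * |x|) := by ring
              _ ≤ |x| * (1 * 1) := by gcongr
              _ = |x| := by ring
          linarith
        have a5 : (|x| - |x| ^ 3 / 6) ^ 2 ≤ Real.sin |x| ^ 2 := by gcongr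
        have a6 : 0 ≤ |x| ^ 4 := by positivity
        have a7 : 0 ≤ |x| ^ 6 := by positivity
        nlinarith
    have hEn : ‖Ef a b φ‖ ≤ (c + D) * |x| ^ 4 := by
      rw [hE]
      refine (norm_add_le _ _).trans ?_
      rw [norm_mul (Gf a b 0 * Q2c a b) _, Complex.norm_real, Real.norm_eq_abs, add_mul]
      gcongr
    calc ‖Ef a b φ‖ * Real.sin φ ≤ ‖Ef a b φ‖ * 1 := by gcongr
      _ ≤ (c + D) * |x| ^ 4 := by rw [mul_one]; exact hEn
      _ ≤ (c + D) * ((Real.pi / 2) ^ 4 * Real.cos φ ^ 4) := by gcongr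
      _ ≤ _ := by
        rw [← mul_assoc, add_mul]
        have : 0 ≤ M / Real.sin δ ^ 4 * Real.cos φ ^ 4 := by positivity
        linarith
  · have hsin : Real.sin δ ≤ Real.sin |x| :=
      Real.sin_le_sin_of_le_of_le_pi_div_two (by linarith [Real.pi_pos]) hxa hge
    have q1 := Qf_norm_sin a b ha hb h0 h1
    have q2 := Qf_norm_sin a b ha hb (φ := Real.pi - φ) (by linarith) (by linarith)
    rw [Real.sin_pi_sub] at q2
    have hEn : ‖Ef a b φ‖ ≤ ‖Qf a b φ‖ + ‖Qf a b (Real.pi - φ)‖ + ‖2 * Gf a b 0‖ + D := by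
      rw [Ef]
      refine (norm_sub_le _ _).trans (add_le_add ((norm_sub_le _ _).trans (add_le_add (norm_add_le _ _) le_rfl)) ?_)
      rw [norm_mul (Gf a b 0 * Q2c a b) _, Complex.norm_real, Real.norm_eq_abs,
        abs_of_nonneg (sq_nonneg _)]
      have : Real.cos φ ^ 2 ≤ 1 := Real.cos_sq_le_one φ
      exact mul_le_of_le_one_right (norm_nonneg _) this
    have hEM : ‖Ef a b φ‖ * Real.sin φ ≤ M := by
      have z1 : ‖2 * Gf a b 0‖ * Real.sin φ ≤ ‖2 * Gf a b 0‖ := mul_le_of_le_one_right (norm_nonneg _) hs1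
      have z2 : D * Real.sin φ ≤ D := mul_le_of_le_one_right (norm_nonneg _) hs1
      have z3 := mul_le_mul_of_nonneg_right hEn hs.le
      rw [hM]
      nlinarith
    refine hEM.trans ?_
    have : M = M / Real.sin δ ^ 4 * Real.sin δ ^ 4 := by field_simp
    calc M = M / Real.sin δ ^ 4 * Real.sin δ ^ 4 := this
      _ ≤ M / Real.sin δ ^ 4 * Real.cos φ ^ 4 := by rw [hcos4]; gcongr
      _ ≤ _ := by
        rw [add_mul]
        have : 0 ≤ (c + D) * (Real.pi / 2) ^ 4 * Real.cos φ ^ 4 := by positivity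
        linarith

lemma laplace_integrable (a b : ℝ) (ha : -(1 / 2 : ℝ) < a) (hb : -(1 / 2 : ℝ) < b) (m : ℕ) :
    IntervalIntegrable (fun φ : ℝ => ((-Complex.I) ^ (m + 1) *
      (((Real.sin φ ^ (m + 1) : ℝ) : ℂ) * Qf a b φ)).re) volume 0 Real.pi := by
  refine IntervalIntegrable.mono_fun' (g := fun _ => (2 : ℝ) ^ (a + 1) * 2 ^ (b + 1))
    intervalIntegrable_const ?_ ?_
  · refine Measurable.aestronglyMeasurable ?_
    unfold Qf
    fun_prop
  · rw [Filter.EventuallyLE, ae_restrict_iff' measurableSet_uIoc]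
    have hne : ∀ᵐ φ : ℝ, φ ≠ Real.pi := by
      simp [ae_iff, measure_singleton]
    filter_upwards [hne] with φ h1 h2
    rw [Set.uIoc_of_le Real.pi_pos.le] at h2
    have h3 := lt_of_le_of_ne h2.2 h1
    have hs : 0 < Real.sin φ := Real.sin_pos_of_pos_of_lt_pi h2.1 h3
    have q := Qf_norm_sin a b ha hb h2.1 h3
    rw [Real.norm_eq_abs]
    refine (Complex.abs_re_le_norm _).trans ?_
    rw [norm_mul, norm_pow, norm_neg, Complex.norm_I, one_pow, one_mul, norm_mul, Complex.norm_real,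
      Real.norm_of_nonneg (by positivity)]
    calc Real.sin φ ^ (m + 1) * ‖Qf a b φ‖ = Real.sin φ ^ m * (‖Qf a b φ‖ * Real.sin φ) := by ring
      _ ≤ 1 * (‖Qf a b φ‖ * Real.sin φ) := by
        gcongr
        exact pow_le_one₀ hs.le (Real.sin_le_one φ)
      _ ≤ _ := by rw [one_mul]; exact q

lemma laplace_int (a b : ℝ) (ha : -(1 / 2 : ℝ) < a) (hb : -(1 / 2 : ℝ) < b) : ∃ K : ℝ, 0 ≤ K ∧
    ∀ m : ℕ, |2 * Real.pi * jacobiP a b (m + 1) 0 -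
      (2 * ((-Complex.I) ^ (m + 1) * Gf a b 0).re * Wn (m + 1) +
      ((-Complex.I) ^ (m + 1) * (Gf a b 0 * Q2c a b)).re * (Wn (m + 1) / (m + 3)))| ≤
      K * (3 * Wn m / ((m + 2) * (m + 4))) := by
  obtain ⟨K, hK, hE⟩ := Ef_bound a b ha hb
  refine ⟨K, hK, fun m => ?_⟩
  set R : ℝ → ℝ := fun φ : ℝ => ((-Complex.I) ^ (m + 1) *
      (((Real.sin φ ^ (m + 1) : ℝ) : ℂ) * Qf a b φ)).re with hR
  have hRi : IntervalIntegrable R volume 0 Real.pi := laplace_integrable a b ha hb m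
  have hRi2 : IntervalIntegrable (fun φ => R (Real.pi - φ)) volume 0 Real.pi := by
    have := hRi.comp_sub_left Real.pi
    simpa using this.symm
  have i1 : Real.pi * jacobiP a b (m + 1) 0 = ∫ φ in (0 : ℝ)..Real.pi, R φ :=
    jacobi_zero_integral a b ha hb (m + 1) (by omega)
  have i2 : ∫ φ in (0 : ℝ)..Real.pi, R (Real.pi - φ) = ∫ φ in (0 : ℝ)..Real.pi, R φ := by
    rw [intervalIntegral.integral_comp_sub_left]; simp
  set r0 := ((-Complex.I) ^ (m + 1) * Gf a b 0).re with hr0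
  set r2 := ((-Complex.I) ^ (m + 1) * (Gf a b 0 * Q2c a b)).re with hr2
  have i3 := Wn_cos2 (m + 1)
  push_cast at i3
  rw [show (m : ℝ) + 1 + 2 = m + 3 by ring] at i3
  have e : 2 * Real.pi * jacobiP a b (m + 1) 0 - (2 * r0 * Wn (m + 1) + r2 * (Wn (m + 1) / (m + 3))) =
      ∫ φ in (0 : ℝ)..Real.pi, ((R φ + R (Real.pi - φ)) - (2 * r0 * Real.sin φ ^ (m + 1) +
        r2 * (Real.sin φ ^ (m + 1) * Real.cos φ ^ 2))) := by
    rw [intervalIntegral.integral_sub (hRi.add hRi2), intervalIntegral.integral_add hRi hRi2, i2,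
      intervalIntegral.integral_add, intervalIntegral.integral_const_mul,
      intervalIntegral.integral_const_mul, i3, ← i1]
    · change _ = _ - (2 * r0 * Wn (m + 1) + _)
      ring
    all_goals exact (by fun_prop : Continuous _).intervalIntegrable _ _
  rw [e, ← Wn_cos4, ← intervalIntegral.integral_const_mul, ← Real.norm_eq_abs]
  refine intervalIntegral.norm_integral_le_of_norm_le Real.pi_pos.le ?_
    ((by fun_prop : Continuous _).intervalIntegrable _ _)
  have hne : ∀ᵐ φ : ℝ, φ ≠ Real.pi := by
    simp [ae_iff, measure_singleton]
  filter_upwards [hne] with φ h1 h2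
  have h3 := lt_of_le_of_ne h2.2 h1
  have hs : 0 < Real.sin φ := Real.sin_pos_of_pos_of_lt_pi h2.1 h3
  have hEφ := hE φ h2.1 h3
  have key : (R φ + R (Real.pi - φ)) - (2 * r0 * Real.sin φ ^ (m + 1) +
        r2 * (Real.sin φ ^ (m + 1) * Real.cos φ ^ 2)) =
        ((-Complex.I) ^ (m + 1) * (((Real.sin φ ^ (m + 1) : ℝ) : ℂ) * Ef a b φ)).re := by
    have c1 : 2 * r0 * Real.sin φ ^ (m + 1) =
        (((2 * Real.sin φ ^ (m + 1) : ℝ) : ℂ) * ((-Complex.I) ^ (m + 1) * Gf a b 0)).re := by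
      rw [Complex.re_ofReal_mul, hr0]; ring
    have c2 : r2 * (Real.sin φ ^ (m + 1) * Real.cos φ ^ 2) =
        (((Real.sin φ ^ (m + 1) * Real.cos φ ^ 2 : ℝ) : ℂ) *
          ((-Complex.I) ^ (m + 1) * (Gf a b 0 * Q2c a b))).re := by
      rw [Complex.re_ofReal_mul, hr2]; ring
    rw [c1, c2]
    simp only [hR, Real.sin_pi_sub]
    rw [← Complex.add_re, ← Complex.add_re, ← Complex.sub_re, Ef]
    congr 1
    push_cast
    ring
  rw [key, Real.norm_eq_abs]
  refine (Complex.abs_re_le_norm _).trans ?_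
  rw [norm_mul, norm_pow, norm_neg, Complex.norm_I, one_pow, one_mul, norm_mul, Complex.norm_real,
      Real.norm_of_nonneg (by positivity)]
  calc Real.sin φ ^ (m + 1) * ‖Ef a b φ‖ = Real.sin φ ^ m * (‖Ef a b φ‖ * Real.sin φ) := by ring
    _ ≤ Real.sin φ ^ m * (K * Real.cos φ ^ 4) := by gcongr
    _ = _ := by ring

lemma Gf_zero (a b : ℝ) : Gf a b 0 = (((2 : ℝ) ^ ((a + b) / 2) : ℝ) : ℂ) *
    Complex.exp (((a - b) * Real.pi / 4 : ℝ) * Complex.I) := by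
  have hs : Real.exp (Real.log 2 / 2) = √2 := by
    rw [← Real.log_sqrt (by norm_num), Real.exp_log (by positivity)]
  have hss : ((√2 : ℝ) : ℂ) * ((√2 / 2 : ℝ) : ℂ) = 1 := by
    rw [← Complex.ofReal_mul, ← mul_div_assoc, Real.mul_self_sqrt (by norm_num)]; norm_num
  have h1 : (1 : ℂ) + Complex.I = Complex.exp ((Real.log 2 / 2 : ℝ) + (Real.pi / 4 : ℝ) * Complex.I) := by
    rw [Complex.exp_add, Complex.exp_mul_I, ← Complex.ofReal_exp, ← Complex.ofReal_cos,
      ← Complex.ofReal_sin, Real.cos_pi_div_four, Real.sin_pi_div_four, hs]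
    linear_combination (-1 - Complex.I) * hss
  have h2 : (1 : ℂ) - Complex.I = Complex.exp ((Real.log 2 / 2 : ℝ) + (-(Real.pi / 4) : ℝ) * Complex.I) := by
    rw [Complex.exp_add, Complex.exp_mul_I, ← Complex.ofReal_exp, ← Complex.ofReal_cos,
      ← Complex.ofReal_sin, Real.cos_neg, Real.sin_neg, Real.cos_pi_div_four, Real.sin_pi_div_four, hs]
    push_cast at hss ⊢
    linear_combination (-1 + Complex.I) * hss
  have hpi := Real.pi_pos
  rw [Gf]
  simp only [mul_zero, Complex.exp_zero, mul_one]
  rw [h1, h2, Complex.cpow_def_of_ne_zero (Complex.exp_ne_zero _),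
    Complex.cpow_def_of_ne_zero (Complex.exp_ne_zero _), Complex.log_exp, Complex.log_exp,
    ← Complex.exp_add, Real.rpow_def_of_pos (by norm_num), Complex.ofReal_exp, ← Complex.exp_add]
  · congr 1
    push_cast
    ring
  all_goals
    rw [Complex.add_im, Complex.ofReal_im, Complex.im_ofReal_mul, Complex.I_im]
    linarith

lemma G_re (a b : ℝ) (n : ℕ) (ω : ℝ)
    (hω : ω = (n + (a + b + 1) / 2) * (Real.pi / 2) - a * Real.pi / 2 - Real.pi / 4) (z : ℂ) :
    ((-Complex.I) ^ n * (Gf a b 0 * z)).re =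
      2 ^ ((a + b) / 2) * (z.re * Real.cos ω + z.im * Real.sin ω) := by
  have h : (-Complex.I) = Complex.exp (-(Real.pi / 2 : ℝ) * Complex.I) := by
    rw [neg_mul, Complex.exp_neg]
    push_cast
    rw [Complex.exp_pi_div_two_mul_I, Complex.inv_I]
  have : (-Complex.I) ^ n * (Gf a b 0 * z) = (((2 : ℝ) ^ ((a + b) / 2) : ℝ) : ℂ) *
      (Complex.exp (((-ω : ℝ) : ℂ) * Complex.I) * z) := by
    rw [Gf_zero, h, ← Complex.exp_nat_mul]
    have e : Complex.exp (((-ω : ℝ) : ℂ) * Complex.I) =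
        Complex.exp (n * (-(Real.pi / 2 : ℝ) * Complex.I)) *
          Complex.exp (((a - b) * Real.pi / 4 : ℝ) * Complex.I) := by
      rw [← Complex.exp_add, hω]
      congr 1
      push_cast
      ring
    rw [e]; ring
  rw [this, Complex.re_ofReal_mul, Complex.mul_re, Complex.exp_ofReal_mul_I_re,
    Complex.exp_ofReal_mul_I_im, Real.cos_neg, Real.sin_neg]
  ring

lemma Q2c_re_im (a b : ℝ) : (Q2c a b).re = -(a * b) - (a + b) / 2 ∧
    (Q2c a b).im = (b ^ 2 - a ^ 2) / 2 := by
  have : Q2c a b = ((-(a * b) - (a + b) / 2 : ℝ) : ℂ) + ((b ^ 2 - a ^ 2) / 2 : ℝ) * Complex.I := by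
    rw [Q2c]
    push_cast
    linear_combination (((a : ℂ) + b) / 2) ^ 2 * Complex.I_mul_I
  rw [this]
  constructor <;> simp only [Complex.add_re, Complex.add_im, Complex.ofReal_re, Complex.ofReal_im,
    Complex.re_ofReal_mul, Complex.im_ofReal_mul, Complex.I_re, Complex.I_im] <;> ring

lemma laplace_alg (x h g A c s q r K N : ℝ) (hx : 1 ≤ x) (hh : 0 < h) (hN : N = x + h)
    (hK : 0 ≤ K) (hA : |A - (1 + g / (2 * N))| ≤ K / N ^ 2) (hc : |c| ≤ 1) (hs : |s| ≤ 1) :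
    |A * (c + (q * c + r * s) / (2 * (x + 2))) - (c + (q * c + r * s + g * c) / (2 * N))| ≤
      (K + (|g| + K) * (|q| + |r|) * (1 + h) + (|q| + |r|) * ((h + 2) * (1 + h))) / N ^ 2 := by
  set T := q * c + r * s with hT
  have hTb : |T| ≤ |q| + |r| := by
    refine (abs_add_le _ _).trans ?_
    rw [abs_mul, abs_mul]
    exact add_le_add (mul_le_of_le_one_right (abs_nonneg _) hc)
      (mul_le_of_le_one_right (abs_nonneg _) hs)
  set B := |q| + |r| with hB
  have hBp : 0 ≤ B := by positivity
  have hN1 : 1 ≤ N := by linarith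
  have hNp : 0 < N := by linarith
  have hNx : 1 / (x + 2) ≤ (1 + h) / N := by
    rw [div_le_div_iff₀ (by linarith) hNp]
    nlinarith
  have e : A * (c + T / (2 * (x + 2))) - (c + (T + g * c) / (2 * N)) =
      (A - (1 + g / (2 * N))) * c + (A - 1) * T / 2 * (1 / (x + 2)) +
        T / 2 * ((h - 2) / N * (1 / (x + 2))) := by
    have : x + 2 ≠ 0 := by linarith
    have hxe : h = N - x := by linarith
    rw [hxe]
    field_simp
    ring
  have hA1 : |A - 1| ≤ (|g| + K) / N := by
    have e1 : A - 1 = (A - (1 + g / (2 * N))) + g / (2 * N) := by ring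
    rw [e1, add_comm |g|, add_div]
    refine (abs_add_le _ _).trans (add_le_add (hA.trans ?_) ?_)
    · apply div_le_div_of_nonneg_left hK hNp; nlinarith
    · rw [abs_div, abs_of_pos (show 0 < 2 * N by linarith)]
      apply div_le_div_of_nonneg_left (abs_nonneg _) hNp; linarith
  have sp : (K + (|g| + K) * B * (1 + h) + B * ((h + 2) * (1 + h))) / N ^ 2 =
      K / N ^ 2 + (|g| + K) * B * (1 + h) / N ^ 2 + B * ((h + 2) * (1 + h)) / N ^ 2 := by ring
  rw [e, sp]
  have hx2 : |1 / (x + 2)| ≤ (1 + h) / N := by rwa [abs_of_pos (by positivity)]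
  refine (abs_add_le _ _).trans (add_le_add ((abs_add_le _ _).trans (add_le_add ?_ ?_)) ?_)
  · rw [abs_mul]
    calc _ ≤ K / N ^ 2 * 1 := by gcongr
      _ = _ := mul_one _
  · rw [abs_mul, abs_div, abs_mul, abs_of_pos (show (0 : ℝ) < 2 by norm_num)]
    calc _ ≤ (|g| + K) / N * B / 1 * ((1 + h) / N) := by
            gcongr
            norm_num
      _ = _ := by field_simp
  · rw [abs_mul, abs_div, abs_mul, abs_of_pos (show (0 : ℝ) < 2 by norm_num), abs_div,
      abs_of_pos hNp]
    have : |h - 2| ≤ h + 2 := by rw [abs_le]; constructor <;> linarith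
    calc _ ≤ B / 1 * ((h + 2) / N * ((1 + h) / N)) := by
            gcongr
            norm_num
      _ = _ := by field_simp

set_option maxHeartbeats 1000000 in
lemma jacobi_zero_pos (a b : ℝ) (ha : -(1 / 2 : ℝ) < a) (hb : -(1 / 2 : ℝ) < b) : ∃ K : ℝ, 0 ≤ K ∧
    ∀ (m : ℕ) (N ω : ℝ), N = m + 1 + (a + b + 1) / 2 →
      ω = N * (Real.pi / 2) - a * Real.pi / 2 - Real.pi / 4 →
      |√(Real.pi * N) * 2 ^ (-(a + b + 1) / 2) * jacobiP a b (m + 1) 0 -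
        (Real.cos ω + N⁻¹ * ((b ^ 2 - a ^ 2) / 4 * Real.sin ω - a * b / 2 * Real.cos ω))| ≤
      K / N ^ 2 := by
  obtain ⟨KE, hKE, HE⟩ := laplace_int a b ha hb
  set g := (a + b) / 2 with hg
  obtain ⟨KW, hKW, HW⟩ := Wn_asymp g (by rw [hg]; linarith)
  set h := g + 1 / 2 with hh
  have hhp : 0 < h := by rw [hh, hg]; linarith
  set q := -(a * b) - g with hq
  set r := (b ^ 2 - a ^ 2) / 2 with hr
  set p : ℝ := 2 ^ g with hp
  have hpp : 0 < p := by positivity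
  refine ⟨3 * (1 + |g| + KW) * KE / p * (1 + h) ^ 2 +
    (KW + (|g| + KW) * (|q| + |r|) * (1 + h) + (|q| + |r|) * ((h + 2) * (1 + h))), by positivity,
    fun m N ω hN hω => ?_⟩
  have HWm := HW (m + 1) (by omega)
  have HEm := HE m
  push_cast at HWm
  have hNx : N = ((m : ℝ) + 1) + h := by rw [hN, hh, hg]; ring
  have hm : (0 : ℝ) ≤ m := Nat.cast_nonneg m
  have hN1 : 1 ≤ N := by linarith
  have hNp : 0 < N := by linarith
  have hNe : (m : ℝ) + 1 + g + 1 / 2 = N := by rw [hNx, hh]; ring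
  rw [hNe] at HWm
  have hωn : ω = (((m + 1 : ℕ) : ℝ) + (a + b + 1) / 2) * (Real.pi / 2) - a * Real.pi / 2 - Real.pi / 4 := by
    rw [hω, hN]; push_cast; ring
  have g1 := G_re a b (m + 1) ω hωn 1
  have g2 := G_re a b (m + 1) ω hωn (Q2c a b)
  rw [(Q2c_re_im a b).1, (Q2c_re_im a b).2] at g2
  simp only [mul_one, Complex.one_re, Complex.one_im, one_mul, zero_mul, add_zero] at g1
  rw [g1, g2] at HEm
  set c := Real.cos ω with hc
  set s := Real.sin ω with hs
  have hpi := Real.pi_pos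
  set W := Wn (m + 1) with hW
  have hWp : 0 < W := Wn_pos _
  set A := √(N / (2 * Real.pi)) * W with hA
  have hAp : 0 ≤ A := by positivity
  set s0 : ℝ := √(Real.pi * N) * 2 ^ (-(a + b + 1) / 2) with hs0
  have hs0p : 0 < s0 := by positivity
  have hscale : s0 * p * W = Real.pi * A := by
    have t1 : (2 : ℝ) ^ (-(a + b + 1) / 2) * p = 1 / √2 := by
      rw [hp, ← Real.rpow_add (by norm_num), Real.sqrt_eq_rpow, one_div, ← Real.rpow_neg (by norm_num)]
      congr 1
      rw [hg]; ring
    have t2 : √(Real.pi * N) = √2 * (Real.pi * √(N / (2 * Real.pi))) := by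
      have : Real.pi * N = 2 * (Real.pi ^ 2 * (N / (2 * Real.pi))) := by field_simp
      rw [this, Real.sqrt_mul (by norm_num), Real.sqrt_mul (by positivity), Real.sqrt_sq hpi.le]
    have t3 : √2 ≠ 0 := by positivity
    calc s0 * p * W = √(Real.pi * N) * (2 ^ (-(a + b + 1) / 2) * p) * W := by rw [hs0]; ring
      _ = _ := by rw [t1, t2, hA]; field_simp
  have halg := laplace_alg ((m : ℝ) + 1) h g A c s q r KW N (by linarith) hhp hNx hKW HWm
    (Real.abs_cos_le_one ω) (Real.abs_sin_le_one ω)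
  have hAb : A ≤ 1 + |g| + KW := by
    have u1 := (abs_le.1 HWm).2
    have u2 : g / (2 * N) ≤ |g| := by
      refine (div_le_div_of_nonneg_right (le_abs_self g) (by linarith)).trans ?_
      exact div_le_self (abs_nonneg _) (by linarith)
    have u3 : KW / N ^ 2 ≤ KW := div_le_self hKW (by nlinarith)
    linarith
  have hWm : Wn m ≤ 2 * W := by
    have v1 := Wn_rec m
    have v2 := Wn_le (m + 1)
    rw [show m + 1 + 1 = m + 2 by ring] at v2
    have v3 := Wn_pos (m + 2)
    have : Wn m * (m + 1) ≤ (2 * W) * (m + 1) := by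
      calc Wn m * (m + 1) = (m + 2) * Wn (m + 2) := by rw [v1]; ring
        _ ≤ (2 * (m + 1)) * W := by
          apply mul_le_mul _ v2 v3.le (by linarith)
          linarith
        _ = _ := by ring
    exact le_of_mul_le_mul_right this (by linarith)
  set D := 2 * Real.pi * jacobiP a b (m + 1) 0 - (2 * (p * c) * W +
    p * (q * c + r * s) * (W / (m + 3))) with hD
  have e : s0 * jacobiP a b (m + 1) 0 = s0 / (2 * Real.pi) * D +
      A * (c + (q * c + r * s) / (2 * ((m : ℝ) + 1 + 2))) := by
    have hA' : A = s0 * p * W / Real.pi := by rw [hscale]; field_simp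
    have : (m : ℝ) + 3 ≠ 0 := by positivity
    have e3 : (m : ℝ) + 1 + 2 = m + 3 := by ring
    rw [hA', hD, e3]
    field_simp
    ring
  have hDs : |s0 / (2 * Real.pi) * D| ≤ 3 * (1 + |g| + KW) * KE / p * (1 + h) ^ 2 / N ^ 2 := by
    rw [abs_mul, abs_of_pos (show 0 < s0 / (2 * Real.pi) by positivity)]
    have hN2 : 1 / (((m : ℝ) + 2) * (m + 4)) ≤ (1 + h) ^ 2 / N ^ 2 := by
      rw [div_le_div_iff₀ (by positivity) (by positivity), one_mul]
      have : N ≤ (1 + h) * (m + 2) := by nlinarith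
      calc N ^ 2 ≤ ((1 + h) * (m + 2)) ^ 2 := by gcongr
        _ = (1 + h) ^ 2 * ((m + 2) * (m + 2)) := by ring
        _ ≤ _ := by gcongr; norm_num
    calc _ ≤ s0 / (2 * Real.pi) * (KE * (3 * (2 * W) / ((m + 2) * (m + 4)))) := by
            refine mul_le_mul_of_nonneg_left (HEm.trans ?_) (by positivity)
            gcongr
      _ = 3 * (s0 * p * W / Real.pi) * KE / p * (1 / (((m : ℝ) + 2) * (m + 4))) := by
            field_simp
      _ = 3 * A * KE / p * (1 / (((m : ℝ) + 2) * (m + 4))) := by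
            rw [hscale]; congr 4; field_simp
      _ ≤ 3 * (1 + |g| + KW) * KE / p * ((1 + h) ^ 2 / N ^ 2) := by gcongr
      _ = _ := by ring
  have target : c + N⁻¹ * ((b ^ 2 - a ^ 2) / 4 * s - a * b / 2 * c) =
      c + (q * c + r * s + g * c) / (2 * N) := by
    rw [hq, hr]; field_simp; ring
  rw [e, target, add_sub_assoc, add_div _ _ (N ^ 2)]
  exact (abs_add_le _ _).trans (add_le_add hDs halg)

lemma jacobi_zero_all (a b : ℝ) (ha : -(1 / 2 : ℝ) < a) (hb : -(1 / 2 : ℝ) < b) : ∃ K : ℝ, 0 ≤ K ∧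
    ∀ (n : ℕ) (N ω : ℝ), N = n + (a + b + 1) / 2 →
      ω = N * (Real.pi / 2) - a * Real.pi / 2 - Real.pi / 4 →
      |√(Real.pi * N) * 2 ^ (-(a + b + 1) / 2) * jacobiP a b n 0 -
        (Real.cos ω + N⁻¹ * ((b ^ 2 - a ^ 2) / 4 * Real.sin ω - a * b / 2 * Real.cos ω))| ≤
      K / N ^ 2 := by
  obtain ⟨K, hK, H⟩ := jacobi_zero_pos a b ha hb
  set N0 : ℝ := (a + b + 1) / 2 with hN0
  have hN0p : 0 < N0 := by rw [hN0]; linarith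
  set X : ℝ → ℝ → ℝ := fun N ω => |√(Real.pi * N) * 2 ^ (-(a + b + 1) / 2) * jacobiP a b 0 0 -
        (Real.cos ω + N⁻¹ * ((b ^ 2 - a ^ 2) / 4 * Real.sin ω - a * b / 2 * Real.cos ω))| with hX
  set K0 := X N0 (N0 * (Real.pi / 2) - a * Real.pi / 2 - Real.pi / 4) * N0 ^ 2 with hK0
  have hK0p : 0 ≤ K0 := by rw [hK0, hX]; positivity
  refine ⟨K + K0, by positivity, fun n N ω hN hω => ?_⟩
  rcases n with _ | m
  · have hNN : N = N0 := by rw [hN]; simp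
    subst hω
    rw [hNN]
    have : X N0 (N0 * (Real.pi / 2) - a * Real.pi / 2 - Real.pi / 4) = K0 / N0 ^ 2 := by
      rw [hK0]; field_simp
    change X N0 (N0 * (Real.pi / 2) - a * Real.pi / 2 - Real.pi / 4) ≤ _
    rw [this]
    gcongr
    linarith
  · refine (H m N ω (by rw [hN]; push_cast; ring) hω).trans ?_
    gcongr
    linarith

lemma pf_half (a b : ℝ) (n : ℕ) :
    pf a b n (Real.pi / 2) = 2 ^ (-(a + b + 1) / 2) * jacobiP a b n 0 := by
  have e0 : Real.pi / 2 / 2 = Real.pi / 4 := by ring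
  rw [pf, Real.cos_pi_div_two, e0, Real.sin_pi_div_four, Real.cos_pi_div_four]
  have h2 : (√2 / 2 : ℝ) = 2 ^ (-(1 / 2) : ℝ) := by
    rw [Real.rpow_neg (by norm_num), ← Real.sqrt_eq_rpow]
    have : (√2 : ℝ) * √2 = 2 := Real.mul_self_sqrt (by norm_num)
    field_simp
    linarith
  have h3 : (√2 / 2 : ℝ) ^ (a + 1 / 2) * (√2 / 2) ^ (b + 1 / 2) = 2 ^ (-(a + b + 1) / 2) := by
    rw [h2, ← Real.rpow_mul (by norm_num), ← Real.rpow_mul (by norm_num),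
      ← Real.rpow_add (by norm_num)]
    congr 1
    ring
  rw [h3]

lemma half_coefs (a b : ℝ) : hf a b (Real.pi / 2) = (a - b) / 2 ∧
    F2' a b (Real.pi / 2) = (b ^ 2 - a ^ 2) / 4 := by
  have e0 : Real.pi / 2 / 2 = Real.pi / 4 := by ring
  have h2 : (√2 / 2 : ℝ) ≠ 0 := by positivity
  rw [hf, F2', e0, Real.sin_pi_div_four, Real.cos_pi_div_four, div_self h2, kA, kB]
  constructor <;> ring

lemma abs_mul_le_of_abs_le_one {x s : ℝ} (hs : |s| ≤ 1) : |x * s| ≤ |x| := by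
  rw [abs_mul]
  exact mul_le_of_le_one_right (abs_nonneg _) hs

lemma w_half (a b : ℝ) (ha : -(1 / 2 : ℝ) < a) (hb : -(1 / 2 : ℝ) < b) : ∃ K : ℝ, 0 ≤ K ∧
    ∀ (n : ℕ) (N : ℝ), N = n + 1 + (a + b + 1) / 2 →
      |√(Real.pi * N) * pf a b (n + 1) (Real.pi / 2) - vf a b N (Real.pi / 2)| ≤ K / N ^ 2 ∧
      |√(Real.pi * N) * pf1 a b n (Real.pi / 2) - vf1 a b N (Real.pi / 2)| ≤ K / N := by
  obtain ⟨K1, hK1, H1⟩ := jacobi_zero_all a b ha hb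
  obtain ⟨K2, hK2, H2⟩ := jacobi_zero_all (a + 1) (b + 1) (by linarith) (by linarith)
  obtain ⟨hh, hF⟩ := half_coefs a b
  set d : ℝ := (a + b + 1) / 2 with hd
  have hd0 : 0 < d := by rw [hd]; linarith
  set q := qf a b (Real.pi / 2) with hq
  set h : ℝ := (a - b) / 2 with hhd
  set f : ℝ := (b ^ 2 - a ^ 2) / 4 with hfd
  set T : ℝ := |h * f| + |h * (a * b / 2)| + |d * (f + (b - a) / 2)| +
    |d * ((a + 1) * (b + 1) / 2)| + |q / 2| with hT
  have hT0 : 0 ≤ T := by positivity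
  refine ⟨K1 + (T + |h| * K1 + (1 + d) * K2), by positivity, fun n N hN => ?_⟩
  have hN1 : 1 ≤ N := by rw [hN]; have : (0 : ℝ) ≤ n := by positivity
                         linarith
  have hN0 : 0 < N := by linarith
  set ω := N * (Real.pi / 2) - a * Real.pi / 2 - Real.pi / 4 with hω
  have A1 := H1 (n + 1) N ω (by rw [hN]; push_cast; ring) hω
  have A2 := H2 n N (ω - Real.pi / 2) (by rw [hN, hd]; ring) (by rw [hω]; ring)
  rw [Real.cos_sub_pi_div_two, Real.sin_sub_pi_div_two] at A2
  have B1 : |√(Real.pi * N) * pf a b (n + 1) (Real.pi / 2) - vf a b N (Real.pi / 2)| ≤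
      K1 / N ^ 2 := by
    rw [pf_half, vf, hF, ← hω]
    rw [mul_assoc] at A1
    exact A1
  refine ⟨B1.trans (by gcongr; have : 0 ≤ T + |h| * K1 + (1 + d) * K2 := by positivity
                       linarith), ?_⟩
  rw [pf1, vf1, ← hω, hh, hF, ← hq]
  rw [vf, hF, ← hω] at B1
  rw [mul_assoc, ← pf_half] at A2
  set s := Real.sin ω with hs
  set c := Real.cos ω with hc
  set P := √(Real.pi * N) * pf a b (n + 1) (Real.pi / 2) with hP
  set R := √(Real.pi * N) * pf (a + 1) (b + 1) n (Real.pi / 2) with hR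
  set e1 := P - (c + N⁻¹ * (f * s - a * b / 2 * c)) with he1
  set e2 := R - (s + N⁻¹ * (((b + 1) ^ 2 - (a + 1) ^ 2) / 4 * -c -
    (a + 1) * (b + 1) / 2 * s)) with he2
  have hsl : |s| ≤ 1 := Real.abs_sin_le_one _
  have hcl : |c| ≤ 1 := Real.abs_cos_le_one _
  have id : √(Real.pi * N) * (h * pf a b (n + 1) (Real.pi / 2) -
        ((n : ℝ) + a + b + 2) * pf (a + 1) (b + 1) n (Real.pi / 2)) -
      (-N * s + N⁻¹ * (-q / 2 * s) + f * c + a * b / 2 * s) =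
      N⁻¹ * (h * f * s - h * (a * b / 2) * c + d * (f + (b - a) / 2) * c +
        d * ((a + 1) * (b + 1) / 2) * s + q / 2 * s) + h * e1 - (N + d) * e2 := by
    have eP : P = e1 + (c + N⁻¹ * (f * s - a * b / 2 * c)) := by rw [he1]; ring
    have eR : R = e2 + (s + N⁻¹ * (((b + 1) ^ 2 - (a + 1) ^ 2) / 4 * -c -
      (a + 1) * (b + 1) / 2 * s)) := by rw [he2]; ring
    have : √(Real.pi * N) * (h * pf a b (n + 1) (Real.pi / 2) -
        ((n : ℝ) + a + b + 2) * pf (a + 1) (b + 1) n (Real.pi / 2)) =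
        h * P - (N + d) * R := by
      rw [hP, hR, hN, hd]; ring
    rw [this, eP, eR, hhd, hfd, hd]
    field_simp
    ring
  rw [id]
  have b1 : |h * f * s - h * (a * b / 2) * c + d * (f + (b - a) / 2) * c +
        d * ((a + 1) * (b + 1) / 2) * s + q / 2 * s| ≤ T := by
    have t1 := abs_mul_le_of_abs_le_one (x := h * f) hsl
    have t2 := abs_mul_le_of_abs_le_one (x := h * (a * b / 2)) hcl
    have t3 := abs_mul_le_of_abs_le_one (x := d * (f + (b - a) / 2)) hcl
    have t4 := abs_mul_le_of_abs_le_one (x := d * ((a + 1) * (b + 1) / 2)) hsl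
    have t5 := abs_mul_le_of_abs_le_one (x := q / 2) hsl
    refine (abs_add_le _ _).trans (add_le_add ((abs_add_le _ _).trans (add_le_add
      ((abs_add_le _ _).trans (add_le_add ((abs_sub _ _).trans (add_le_add t1 t2)) t3)) t4)) t5)
  have b2 : |h * e1| ≤ |h| * K1 / N := by
    rw [abs_mul, mul_div_assoc]
    gcongr
    refine B1.trans ?_
    gcongr
    exact le_self_pow₀ hN1 two_ne_zero
  have b3 : |(N + d) * e2| ≤ (1 + d) * K2 / N := by
    rw [abs_mul, abs_of_pos (by positivity : 0 < N + d)]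
    calc (N + d) * |e2| ≤ (N + d * N) * (K2 / N ^ 2) := by
          gcongr
          exact le_mul_of_one_le_right hd0.le hN1
      _ = (1 + d) * K2 / N := by field_simp
  have b4 : |N⁻¹ * (h * f * s - h * (a * b / 2) * c + d * (f + (b - a) / 2) * c +
        d * ((a + 1) * (b + 1) / 2) * s + q / 2 * s)| ≤ T / N := by
    rw [abs_mul, abs_of_pos (by positivity : 0 < N⁻¹), div_eq_inv_mul T N]
    exact mul_le_mul_of_nonneg_left b1 (by positivity)
  refine ((abs_sub _ _).trans (add_le_add ((abs_add_le _ _).trans (add_le_add b4 b2)) b3)).trans ?_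
  rw [← add_div, ← add_div]
  exact div_le_div_of_nonneg_right (by linarith) hN0.le

lemma w_bound (a b ε : ℝ) (ha : -(1 / 2 : ℝ) < a) (hb : -(1 / 2 : ℝ) < b)
    (hε : 0 < ε) : ∃ C : ℝ, 0 < C ∧
    ∀ (n : ℕ) (N θ : ℝ), N = n + 1 + (a + b + 1) / 2 → 0 < θ → θ ≤ Real.pi - ε → 1 ≤ N * θ →
      |√(Real.pi * N) * pf a b (n + 1) θ - vf a b N θ| ≤ C / (N ^ 2 * θ ^ 2) := by
  have hpi := Real.pi_pos
  obtain ⟨K1, hK1, H1⟩ := w_half a b ha hb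
  obtain ⟨K, hK, H⟩ := coef_bounds a b (min ε (Real.pi / 2)) (by positivity) (min_le_right _ _)
  set D := Real.exp (3 * K) * (2 * K1 ^ 2 * Real.pi ^ 4 + 1) with hD
  have hD0 : 0 < D := by positivity
  refine ⟨√D, by positivity, fun n N θ hN hθ hθ2 hNθ => ?_⟩
  have hN1 : 1 ≤ N := by rw [hN]; have : (0 : ℝ) ≤ n := by positivity
                         linarith
  have hN0 : 0 < N := by linarith
  obtain ⟨w0, w10⟩ := H1 n N hN
  have hmem : ∀ t ∈ Set.uIcc θ (Real.pi / 2), 0 < t ∧ t ≤ Real.pi - min ε (Real.pi / 2) ∧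
      t < Real.pi := by
    intro t ht
    rw [Set.mem_uIcc] at ht
    have m1 := min_le_left ε (Real.pi / 2)
    have m2 := min_le_right ε (Real.pi / 2)
    rcases ht with ⟨x, y⟩ | ⟨x, y⟩
    · exact ⟨by linarith, by linarith, by linarith⟩
    · exact ⟨by linarith, by linarith, by linarith⟩
  have cmp := comparison (fun t => √(Real.pi * N) * pf a b (n + 1) t - vf a b N t)
    (fun t => √(Real.pi * N) * pf1 a b n t - vf1 a b N t)
    (fun t => √(Real.pi * N) * (-(N ^ 2 + qf a b t) * pf a b (n + 1) t) -
      (-(N ^ 2 + qf a b t) * vf a b N t + N⁻¹ *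
      ((F2dd a b t + qf a b t * F2' a b t) * Real.sin (N * t - a * Real.pi / 2 - Real.pi / 4) -
      qf a b t * (a * b / 2) * Real.cos (N * t - a * Real.pi / 2 - Real.pi / 4))))
    N K θ hN1 hK hθ (by linarith) hNθ
    (fun t ht => ((pf_hasDerivAt a b ha hb n (hmem t ht).1 (hmem t ht).2.2).const_mul _).sub
      (vf_hasDerivAt a b hN0 (hmem t ht).1 (hmem t ht).2.2))
    (fun t ht => by
      have := (pf1_hasDerivAt a b ha hb n (hmem t ht).1 (hmem t ht).2.2)
      rw [← hN] at this
      exact (this.const_mul _).sub (vf1_hasDerivAt a b hN0 (hmem t ht).1 (hmem t ht).2.2))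
    (fun t ht => by
      obtain ⟨q1, q2⟩ := H t (hmem t ht).1 (hmem t ht).2.1
      have ht0 := (hmem t ht).1
      set W := √(Real.pi * N) * pf a b (n + 1) t - vf a b N t with hW
      set s := Real.sin (N * t - a * Real.pi / 2 - Real.pi / 4) with hs
      set c := Real.cos (N * t - a * Real.pi / 2 - Real.pi / 4) with hc
      have hsl : |s| ≤ 1 := Real.abs_sin_le_one _
      have hcl : |c| ≤ 1 := Real.abs_cos_le_one _
      have e : √(Real.pi * N) * (-(N ^ 2 + qf a b t) * pf a b (n + 1) t) -
          (-(N ^ 2 + qf a b t) * vf a b N t + N⁻¹ *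
          ((F2dd a b t + qf a b t * F2' a b t) * s - qf a b t * (a * b / 2) * c)) + N ^ 2 * W =
          -(qf a b t * W) - N⁻¹ *
          ((F2dd a b t + qf a b t * F2' a b t) * s - qf a b t * (a * b / 2) * c) := by
        rw [hW]; ring
      rw [e]
      refine (abs_sub _ _).trans (add_le_add ?_ ?_)
      · rw [abs_neg, abs_mul]
        gcongr
      · rw [abs_mul, abs_of_pos (by positivity : 0 < N⁻¹)]
        calc _ ≤ N⁻¹ * (K / t ^ 3) := by
              gcongr
              exact ((abs_sub _ _).trans (add_le_add (abs_mul_le_of_abs_le_one hsl)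
                (abs_mul_le_of_abs_le_one hcl))).trans q2
          _ = K / (N * t ^ 3) := by field_simp)
  set W := √(Real.pi * N) * pf a b (n + 1) θ - vf a b N θ with hW
  set W0 := √(Real.pi * N) * pf a b (n + 1) (Real.pi / 2) - vf a b N (Real.pi / 2) with hW0
  set V0 := √(Real.pi * N) * pf1 a b n (Real.pi / 2) - vf1 a b N (Real.pi / 2) with hV0
  have s0 : N ^ 2 * W0 ^ 2 ≤ K1 ^ 2 / N ^ 2 := by
    calc N ^ 2 * W0 ^ 2 = N ^ 2 * |W0| ^ 2 := by rw [sq_abs]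
      _ ≤ N ^ 2 * (K1 / N ^ 2) ^ 2 := by gcongr
      _ = K1 ^ 2 / N ^ 2 := by field_simp
  have s1 : V0 ^ 2 ≤ K1 ^ 2 / N ^ 2 := by
    calc V0 ^ 2 = |V0| ^ 2 := by rw [sq_abs]
      _ ≤ (K1 / N) ^ 2 := by gcongr
      _ = K1 ^ 2 / N ^ 2 := by field_simp
  have s2 : K1 ^ 2 / N ^ 2 ≤ K1 ^ 2 * Real.pi ^ 4 / (N ^ 2 * θ ^ 4) := by
    rw [div_le_div_iff₀ (by positivity) (by positivity)]
    have : θ ^ 4 ≤ Real.pi ^ 4 := by gcongr; linarith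
    calc K1 ^ 2 * (N ^ 2 * θ ^ 4) ≤ K1 ^ 2 * (N ^ 2 * Real.pi ^ 4) := by gcongr
      _ = _ := by ring
  have s3 : N ^ 2 * W ^ 2 ≤ D / (N ^ 2 * θ ^ 4) := by
    have x1 : N ^ 2 * W ^ 2 ≤ Real.exp (3 * K) *
      (N ^ 2 * W0 ^ 2 + V0 ^ 2 + 1 / (N ^ 2 * θ ^ 4)) := by
      refine le_trans ?_ cmp
      have : 0 ≤ (√(Real.pi * N) * pf1 a b n θ - vf1 a b N θ) ^ 2 + 1 / (N ^ 2 * θ ^ 4) := by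
        positivity
      linarith
    refine x1.trans ?_
    rw [hD, mul_div_assoc]
    gcongr
    have : (2 * K1 ^ 2 * Real.pi ^ 4 + 1) / (N ^ 2 * θ ^ 4) =
      K1 ^ 2 * Real.pi ^ 4 / (N ^ 2 * θ ^ 4) + K1 ^ 2 * Real.pi ^ 4 / (N ^ 2 * θ ^ 4) +
        1 / (N ^ 2 * θ ^ 4) := by ring
    rw [this]
    linarith
  have s4 : W ^ 2 ≤ (√D / (N ^ 2 * θ ^ 2)) ^ 2 := by
    rw [div_pow, Real.sq_sqrt hD0.le]
    rw [le_div_iff₀ (by positivity)] at s3 ⊢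
    linarith
  exact abs_le_of_sq_le_sq s4 (by positivity)

/-- Lemma 2.3 ii): two-term asymptotics of the Jacobi polynomial.  For
`α,β > −1/2` with `α − β > −4`, and `0 < ε < π`, for `ℓ ≥ 1` and `c/ℓ ≤ θ ≤ π − ε`,
`|P_ℓ^{(α,β)}(cos θ) − ℓ̃^{−1/2} m_{α,β}(θ)[cos ω_α(ℓ̃θ) + ℓ̃^{−1}F^{(1)}_{α,β}(ℓ̃,θ)]|
  ≤ C ℓ̃^{−1/2} m_{α,β}(θ)(ℓ^{û(α)} θ^{ν̂(α)} + ℓ^{−2} θ^{−2})`,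
with `c = c(α,β) > 0` and `C = C(ε,α,β) > 0`, where `ℓ̃ = ℓ + (α+β+1)/2`. -/
theorem jacobi_two_term_asymptotics (α β : ℝ)
    (hα : -(1 / 2 : ℝ) < α) (hβ : -(1 / 2 : ℝ) < β) (hαβ : -4 < α - β) :
    ∃ c : ℝ, 0 < c ∧
      ∀ ε : ℝ, 0 < ε → ε < Real.pi →
        ∃ C : ℝ, 0 < C ∧
          ∀ ℓ : ℕ, 1 ≤ ℓ → ∀ θ : ℝ, c / (ℓ : ℝ) ≤ θ → θ ≤ Real.pi - ε →
            |jacobiP α β ℓ (Real.cos θ) -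
                ((ℓ : ℝ) + (α + β + 1) / 2) ^ (-(1 / 2 : ℝ)) * mAB α β θ *
                  (Real.cos (omegaA α (((ℓ : ℝ) + (α + β + 1) / 2) * θ)) +
                    ((ℓ : ℝ) + (α + β + 1) / 2)⁻¹ *
                      F1fn α β ((ℓ : ℝ) + (α + β + 1) / 2) θ)| ≤
              C * ((ℓ : ℝ) + (α + β + 1) / 2) ^ (-(1 / 2 : ℝ)) * mAB α β θ *
                ((ℓ : ℝ) ^ uHat α * θ ^ nuHat α + (ℓ : ℝ) ^ (-(2 : ℝ)) * θ ^ (-(2 : ℝ))) := by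
  have hpi := Real.pi_pos
  refine ⟨1, one_pos, fun ε hε hεπ => ?_⟩
  obtain ⟨C, hC, H⟩ := w_bound α β ε hα hβ hε
  refine ⟨C, hC, fun ℓ hℓ θ hθ1 hθ2 => ?_⟩
  obtain ⟨n, rfl⟩ : ∃ n, ℓ = n + 1 := ⟨ℓ - 1, by omega⟩
  set L : ℝ := ((n + 1 : ℕ) : ℝ) with hL
  have hL0 : 0 < L := by rw [hL]; positivity
  set N : ℝ := L + (α + β + 1) / 2 with hN
  have hLN : L ≤ N := by rw [hN]; linarith
  have hN0 : 0 < N := by linarith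
  have hθ : 0 < θ := lt_of_lt_of_le (by positivity) hθ1
  have hθπ : θ < Real.pi := by linarith
  have hLθ : 1 ≤ L * θ := by rwa [div_le_iff₀' hL0] at hθ1
  have hNθ : 1 ≤ N * θ := hLθ.trans (by gcongr)
  have W := H n N θ (by rw [hN, hL]; push_cast; ring) hθ hθ2 hNθ
  obtain ⟨hs, hc⟩ := sc_half_pos hθ hθπ
  set A := N ^ (-(1 / 2 : ℝ)) * mAB α β θ with hA
  have hA0 : 0 < A := by rw [hA, mAB]; positivity
  have e1 : jacobiP α β (n + 1) (Real.cos θ) = A * (√(Real.pi * N) * pf α β (n + 1) θ) := by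
    rw [hA, mAB, pf, Real.sqrt_eq_rpow, Real.mul_rpow hpi.le hN0.le]
    have x1 : N ^ (-(1 / 2 : ℝ)) * N ^ (1 / 2 : ℝ) = 1 := by
      rw [← Real.rpow_add hN0]; norm_num
    have x2 : Real.pi ^ (-(1 / 2 : ℝ)) * Real.pi ^ (1 / 2 : ℝ) = 1 := by
      rw [← Real.rpow_add hpi]; norm_num
    have x3 : Real.sin (θ / 2) ^ (-α - 1 / 2) * Real.sin (θ / 2) ^ (α + 1 / 2) = 1 := by
      rw [← Real.rpow_add hs, show -α - 1 / 2 + (α + 1 / 2) = 0 by ring, Real.rpow_zero]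
    have x4 : Real.cos (θ / 2) ^ (-β - 1 / 2) * Real.cos (θ / 2) ^ (β + 1 / 2) = 1 := by
      rw [← Real.rpow_add hc, show -β - 1 / 2 + (β + 1 / 2) = 0 by ring, Real.rpow_zero]
    calc jacobiP α β (n + 1) (Real.cos θ) = (N ^ (-(1 / 2 : ℝ)) * N ^ (1 / 2 : ℝ)) *
          (Real.pi ^ (-(1 / 2 : ℝ)) * Real.pi ^ (1 / 2 : ℝ)) *
          (Real.sin (θ / 2) ^ (-α - 1 / 2) * Real.sin (θ / 2) ^ (α + 1 / 2)) *
          (Real.cos (θ / 2) ^ (-β - 1 / 2) * Real.cos (θ / 2) ^ (β + 1 / 2)) *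
          jacobiP α β (n + 1) (Real.cos θ) := by rw [x1, x2, x3, x4]; ring
      _ = _ := by ring
  have e2 : Real.cos (omegaA α (N * θ)) + N⁻¹ * F1fn α β N θ = vf α β N θ := by
    rw [F1fn, F2fn_eq α β hθ hθπ, vf]
    have : omegaA (α + 1) (N * θ) = omegaA α (N * θ) - Real.pi / 2 := by
      rw [omegaA, omegaA]; ring
    rw [this, Real.cos_sub_pi_div_two, omegaA]
  have e3 : L ^ (-(2 : ℝ)) * θ ^ (-(2 : ℝ)) = 1 / (L ^ 2 * θ ^ 2) := by
    rw [Real.rpow_neg hL0.le, Real.rpow_neg hθ.le, Real.rpow_two, Real.rpow_two, one_div, mul_inv]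
  rw [e2, e1, e3, ← mul_sub, abs_mul, abs_of_pos hA0, mul_assoc C, ← hA]
  calc A * |√(Real.pi * N) * pf α β (n + 1) θ - vf α β N θ| ≤ A * (C / (N ^ 2 * θ ^ 2)) := by
        gcongr
    _ ≤ A * (C / (L ^ 2 * θ ^ 2)) := by gcongr
    _ = C * A * (0 + 1 / (L ^ 2 * θ ^ 2)) := by ring
    _ ≤ _ := by
        gcongr
        positivity
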